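/- arXiv:1109.1079 — 5 statements merged into one kernel-verified Lean document; each statement's English description precedes it below -/
import Mathlib

section
/- Let n, r be positive integers with r ≤ n and let F be a maximal intersecting family of r-element subsets of [n] with ∪F = [n]. Then Δ(F) ≤ (n + r^r) · δ(F); that is, the ratio of the maximum degree to the minimum degree of F is at most n + r^r. -/
/-- The degree of `x` in the family `F`: the number of members of `F` containing `x`. -/
def degree (F : Finset (Finset ℕ)) (x : ℕ) : ℕ := (F.filter (fun A => x ∈ A)).card

/-- `F` is an intersecting family: any two members have nonempty intersection. -/
def IsIntersecting (F : Finset (Finset ℕ)) : Prop :=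
  ∀ A ∈ F, ∀ B ∈ F, (A ∩ B).Nonempty

/-- `F` is a family of `r`-element subsets of `[n] = {1,…,n}`. -/
def IsFamily (n r : ℕ) (F : Finset (Finset ℕ)) : Prop :=
  ∀ A ∈ F, A ⊆ Finset.Icc 1 n ∧ A.card = r

/-- `F` is a maximal intersecting family of `r`-subsets of `[n]`: it is intersecting and
every `r`-subset of `[n]` not in `F` is disjoint from some member of `F`. -/
def IsMaxIntersecting (n r : ℕ) (F : Finset (Finset ℕ)) : Prop :=
  IsIntersecting F ∧
    ∀ G : Finset ℕ, G ⊆ Finset.Icc 1 n → G.card = r → G ∉ F → ∃ A ∈ F, A ∩ G = ∅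

/-- `∪F = [n]`: every element of `[n]` lies in some member of `F`. -/
def Covers (n : ℕ) (F : Finset (Finset ℕ)) : Prop :=
  ∀ x ∈ Finset.Icc 1 n, ∃ A ∈ F, x ∈ A

/-- `Δ(F)`: the maximum degree over `x ∈ [n]`. -/
noncomputable def maxDeg (n : ℕ) (F : Finset (Finset ℕ)) : ℕ :=
  sSup (degree F '' Set.Icc 1 n)

/-- `δ(F)`: the minimum degree over `x ∈ [n]`. -/
noncomputable def minDeg (n : ℕ) (F : Finset (Finset ℕ)) : ℕ :=
  sInf (degree F '' Set.Icc 1 n)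

/-! A member of `F` that is not a minimal transversal of `F` can give up a point and still meet all
of `F`; by maximality it may trade that point for any prescribed `x`, and undoing the trade shows
that there are at most `n · deg x` such members. The members that are minimal transversals are
counted by branching: a proper subset `S` of one of them misses some edge, and every transversal
extending `S` must pick one of the at most `r` points of that edge. Starting from `S = ∅`, this
leaves at most `r ^ r` of them. -/

section Transversal

open Finset

variable {α : Type*} {H : Set (Finset α)} {S T : Finset α}

/-- `T` is a transversal (also: hitting set) of the hypergraph `H`, that is, `T` meets every edge.
Members of an intersecting family are transversals of it. -/
def IsTransversal (H : Set (Finset α)) (T : Finset α) : Prop :=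
  ∀ ⦃E⦄, E ∈ H → ¬Disjoint E T

theorem IsTransversal.mono (hS : IsTransversal H S) (hST : S ⊆ T) : IsTransversal H T :=
  fun _ hE hdisj ↦ hS hE (hdisj.mono_right hST)

theorem IsTransversal.exists_erase_of_not_minimal [DecidableEq α] (hT : IsTransversal H T)
    (hmin : ¬Minimal (IsTransversal H) T) : ∃ z ∈ T, IsTransversal H (T.erase z) := by
  obtain ⟨S, hST, hS⟩ := (not_minimal_iff_exists_lt hT).1 hmin
  obtain ⟨z, hz, hSz⟩ := ssubset_iff_exists_subset_erase.1 hST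
  exact ⟨z, hz, hS.mono hSz⟩

theorem exists_disjoint_of_ssubset_of_minimal (hT : Minimal (IsTransversal H) T) (hST : S ⊂ T) :
    ∃ E ∈ H, Disjoint E S := by
  simpa [IsTransversal] using hT.not_prop_of_lt hST

theorem card_minimal_isTransversal_le_pow {k j : ℕ} (hH : ∀ E ∈ H, #E ≤ k)
    {M : Finset (Finset α)} (hM : ∀ T ∈ M, Minimal (IsTransversal H) T)
    (hSM : ∀ T ∈ M, S ⊆ T) (hcard : ∀ T ∈ M, #T = #S + j) : #M ≤ k ^ j := by
  classical
  induction j generalizing S M with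
  | zero =>
    have eq_S : ∀ T ∈ M, T = S := fun T hT ↦
      (eq_of_subset_of_card_le (hSM T hT) (hcard T hT).le).symm
    rw [pow_zero, card_le_one]
    exact fun T hT U hU ↦ (eq_S T hT).trans (eq_S U hU).symm
  | succ j ih =>
    obtain rfl | ⟨T, hT⟩ := M.eq_empty_or_nonempty
    · simp
    have hST : S ⊂ T := (hSM T hT).ssubset_of_ne
      (ne_of_apply_ne card (by rw [hcard T hT]; omega))
    obtain ⟨E, hE, hES⟩ := exists_disjoint_of_ssubset_of_minimal (hM T hT) hST
    have branch : M ⊆ E.biUnion fun e ↦ {U ∈ M | e ∈ U} := fun U hU ↦ by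
      obtain ⟨e, heE, heU⟩ := not_disjoint_iff.1 ((hM U hU).prop hE)
      exact mem_biUnion.2 ⟨e, heE, mem_filter.2 ⟨hU, heU⟩⟩
    have card_branch : ∀ e ∈ E, #{U ∈ M | e ∈ U} ≤ k ^ j := fun e he ↦ by
      have heS : e ∉ S := disjoint_left.1 hES he
      refine ih (S := insert e S) ?_ ?_ ?_ <;> intro U hU <;> rw [mem_filter] at hU
      · exact hM U hU.1
      · exact insert_subset hU.2 (hSM U hU.1)
      · rw [hcard U hU.1, card_insert_of_notMem heS, add_assoc, add_comm 1]
    calc #M ≤ #(E.biUnion fun e ↦ {U ∈ M | e ∈ U}) := card_le_card branch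
      _ ≤ #E * k ^ j := card_biUnion_le_card_mul _ _ _ card_branch
      _ ≤ k ^ (j + 1) := by rw [pow_succ']; gcongr; exact hH E hE

end Transversal

section UniformIntersecting

open Finset

variable {α : Type*} [DecidableEq α] {V : Finset α} {r : ℕ} {F : Finset (Finset α)} {x : α}

/-- `F` is an intersecting family of `r`-element subsets of the finite ground set `V`. The maximal
such families are expressed by `Maximal (IsUniformIntersecting V r)`. -/
def IsUniformIntersecting (V : Finset α) (r : ℕ) (F : Finset (Finset α)) : Prop :=
  F ⊆ V.powersetCard r ∧ (F : Set (Finset α)).Intersecting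

theorem IsUniformIntersecting.isTransversal (hF : IsUniformIntersecting V r F) {A : Finset α}
    (hA : A ∈ F) : IsTransversal (F : Set (Finset α)) A :=
  fun _ hE ↦ hF.2 hE hA

theorem mem_of_maximal_of_isTransversal (hF : Maximal (IsUniformIntersecting V r) F)
    {G : Finset α} (hG : G ∈ V.powersetCard r) (hne : G.Nonempty)
    (htrans : IsTransversal (F : Set (Finset α)) G) : G ∈ F := by
  have hinsert : IsUniformIntersecting V r (insert G F) := by
    refine ⟨insert_subset hG hF.prop.1, ?_⟩
    rw [coe_insert]
    exact hF.prop.2.insert hne.ne_empty fun E hE hdisj ↦ htrans hE hdisj.symm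
  exact hF.le_of_ge hinsert (subset_insert G F) (mem_insert_self G F)

theorem exists_mem_insert_erase_eq (hF : Maximal (IsUniformIntersecting V r) F) (hx : x ∈ V)
    {A : Finset α} (hA : A ∈ F) (hmin : ¬Minimal (IsTransversal (F : Set (Finset α))) A) :
    ∃ B ∈ F, x ∈ B ∧ ∃ z ∈ V, insert z (B.erase x) = A := by
  by_cases hxA : x ∈ A
  · exact ⟨A, hA, hxA, x, hx, insert_erase hxA⟩
  obtain ⟨hAV, hAr⟩ := mem_powersetCard.1 (hF.prop.1 hA)
  obtain ⟨z, hz, htrans⟩ := (hF.prop.isTransversal hA).exists_erase_of_not_minimal hmin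
  have hxz : x ∉ A.erase z := fun h ↦ hxA (mem_of_mem_erase h)
  have hB : insert x (A.erase z) ∈ V.powersetCard r := mem_powersetCard.2
    ⟨insert_subset hx ((erase_subset z A).trans hAV),
      by rw [card_insert_of_notMem hxz, card_erase_add_one hz, hAr]⟩
  refine ⟨insert x (A.erase z), ?_, mem_insert_self _ _, z, hAV hz, ?_⟩
  · exact mem_of_maximal_of_isTransversal hF hB (insert_nonempty _ _)
      (htrans.mono (subset_insert _ _))
  · rw [erase_insert hxz, insert_erase hz]

theorem card_not_minimal_isTransversal_le (hF : Maximal (IsUniformIntersecting V r) F)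
    (hx : x ∈ V) {M : Finset (Finset α)} (hMF : M ⊆ F)
    (hM : ∀ A ∈ M, ¬Minimal (IsTransversal (F : Set (Finset α))) A) :
    #M ≤ #V * #{B ∈ F | x ∈ B} := by
  have hsub : M ⊆ image₂ (fun z B ↦ insert z (B.erase x)) V {B ∈ F | x ∈ B} := fun A hA ↦ by
    obtain ⟨B, hB, hxB, z, hz, rfl⟩ := exists_mem_insert_erase_eq hF hx (hMF hA) (hM A hA)
    exact mem_image₂_of_mem hz (mem_filter.2 ⟨hB, hxB⟩)
  exact (card_le_card hsub).trans (card_image₂_le _ _ _)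

theorem card_le_mul_card_filter_mem_add_pow (hF : Maximal (IsUniformIntersecting V r) F)
    (hx : x ∈ V) : #F ≤ #V * #{B ∈ F | x ∈ B} + r ^ r := by
  classical
  have hcard : ∀ A ∈ F, #A = r := fun A hA ↦ (mem_powersetCard.1 (hF.prop.1 hA)).2
  have hmin : #{A ∈ F | Minimal (IsTransversal (F : Set (Finset α))) A} ≤ r ^ r :=
    card_minimal_isTransversal_le_pow (S := ∅) (fun E hE ↦ (hcard E hE).le)
      (fun A hA ↦ (mem_filter.1 hA).2) (fun A _ ↦ empty_subset A)
      (fun A hA ↦ by rw [hcard A (mem_filter.1 hA).1, card_empty, zero_add])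
  have hnot : #{A ∈ F | ¬Minimal (IsTransversal (F : Set (Finset α))) A} ≤
      #V * #{B ∈ F | x ∈ B} :=
    card_not_minimal_isTransversal_le hF hx (filter_subset _ _) fun A hA ↦ (mem_filter.1 hA).2
  rw [← card_filter_add_card_filter_not (Minimal (IsTransversal (F : Set (Finset α)))), add_comm]
  exact add_le_add hnot hmin

theorem maxDeg_le_minDeg_mul_general (hF : Maximal (IsUniformIntersecting V r) F)
    (hx : ∃ A ∈ F, x ∈ A) (y : α) :
    #{A ∈ F | y ∈ A} ≤ (#V + r ^ r) * #{A ∈ F | x ∈ A} := by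
  obtain ⟨A, hA, hxA⟩ := hx
  have hxV : x ∈ V := (mem_powersetCard.1 (hF.prop.1 hA)).1 hxA
  have hpos : 0 < #{A ∈ F | x ∈ A} := card_pos.2 ⟨A, mem_filter.2 ⟨hA, hxA⟩⟩
  calc #{A ∈ F | y ∈ A} ≤ #F := card_filter_le _ _
    _ ≤ #V * #{A ∈ F | x ∈ A} + r ^ r := card_le_mul_card_filter_mem_add_pow hF hxV
    _ ≤ #V * #{A ∈ F | x ∈ A} + r ^ r * #{A ∈ F | x ∈ A} := by
      gcongr; exact Nat.le_mul_of_pos_right _ hpos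
    _ = (#V + r ^ r) * #{A ∈ F | x ∈ A} := (add_mul _ _ _).symm

end UniformIntersecting

section Degree

variable {n r : ℕ} {F : Finset (Finset ℕ)}

theorem IsMaxIntersecting.maximal (hmax : IsMaxIntersecting n r F) (hfam : IsFamily n r F) :
    Maximal (IsUniformIntersecting (Finset.Icc 1 n) r) F := by
  refine ⟨⟨fun A hA ↦ Finset.mem_powersetCard.2 (hfam A hA), fun A hA B hB ↦
    Finset.not_disjoint_iff_nonempty_inter.2 (hmax.1 A hA B hB)⟩, ?_⟩
  intro F' hF' hFF' G hG
  by_contra hGF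
  obtain ⟨hGn, hGr⟩ := Finset.mem_powersetCard.1 (hF'.1 hG)
  obtain ⟨A, hA, hAG⟩ := hmax.2 G hGn hGr hGF
  exact hF'.2 (hFF' hA) hG (Finset.disjoint_iff_inter_eq_empty.2 hAG)

theorem exists_degree_eq_maxDeg (hn : 1 ≤ n) (F : Finset (Finset ℕ)) :
    ∃ y, degree F y = maxDeg n F := by
  obtain ⟨y, -, hy⟩ := ((Set.nonempty_Icc.2 hn).image (degree F)).csSup_mem
    ((Set.finite_Icc 1 n).image (degree F))
  exact ⟨y, hy⟩

theorem exists_degree_eq_minDeg (hn : 1 ≤ n) (F : Finset (Finset ℕ)) :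
    ∃ x ∈ Finset.Icc 1 n, degree F x = minDeg n F := by
  obtain ⟨x, hx, hxF⟩ := Nat.sInf_mem ((Set.nonempty_Icc.2 hn).image (degree F))
  exact ⟨x, Finset.mem_Icc.2 hx, hxF⟩

end Degree

/-- For a maximal intersecting family `F` of `r`-subsets of `[n]` with
`∪F = [n]`, the ratio of maximum to minimum degree is at most `n + r^r`. -/
theorem maxDeg_le_minDeg_mul (n r : ℕ) (hr : 1 ≤ r) (hrn : r ≤ n)
    (F : Finset (Finset ℕ)) (hfam : IsFamily n r F)
    (hmax : IsMaxIntersecting n r F) (hcov : Covers n F) :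
    maxDeg n F ≤ (n + r ^ r) * minDeg n F := by
  obtain ⟨y, hy⟩ := exists_degree_eq_maxDeg (hr.trans hrn) F
  obtain ⟨x, hx, hxF⟩ := exists_degree_eq_minDeg (hr.trans hrn) F
  rw [← hy, ← hxF]
  simpa only [degree, Nat.card_Icc, Nat.add_sub_cancel] using
    maxDeg_le_minDeg_mul_general (hmax.maximal hfam) (hcov x hx) y
end

section
/- Let n, r be integers with r ≥ 3 and 2r + 2 < n. Then there exists a maximal intersecting family F of r-element subsets of [n] with ∪F = [n] such that Δ(F) · binom(2r−3, r−2) ≥ (n − 2r + 3) · binom(2r−3, r−2) · δ(F) − (n − 2r + 2) · δ(F); equivalently, Δ(F)/δ(F) ≥ n − 2r + 3 − (n − 2r + 2)/binom(2r−3, r−2). -/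
/-!
Fix a center `c` and a core `T` of `2r - 3` further points, and take all `r`-sets inside `T`
together with all `r`-sets through `c` having at least `r - 2` points in `T`. Two members not both
containing `c` meet inside `T`, since `r + (r - 2) > 2r - 3`; a nonmember leaves enough of `T`
uncovered to build a member avoiding it. A point outside `T ∪ {c}` lies only in the members formed
by itself, `c` and `r - 2` points of `T`. The members through `c` arise from the `n - 2r + 2`
choices of such a point, together with those having `r - 1` points in `T`. Since
`binom(2r - 3, r - 2) = binom(2r - 3, r - 1)`, the quotient of the two degrees is `n - 2r + 3`.
-/

open Finset

section Counting

variable {α : Type*} [DecidableEq α] {V T X A P Q : Finset α}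

lemma inter_union_sdiff_union_eq (hXA : X ⊆ A) : A ∩ T ∪ A \ (T ∪ X) ∪ X = A := by
  have hsplit : A ∩ (T ∪ X) = A ∩ T ∪ X := by
    rw [inter_union_distrib_left, inter_eq_right.2 hXA]
  rw [union_right_comm, ← hsplit, union_comm, sdiff_union_inter]

lemma card_eq_card_inter_add_card_sdiff_add_card (hXA : X ⊆ A) (hTX : Disjoint T X) :
    #A = #(A ∩ T) + #(A \ (T ∪ X)) + #X := by
  rw [← card_inter_add_card_sdiff A (T ∪ X), inter_union_distrib_left, inter_eq_right.2 hXA,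
    card_union_of_disjoint (hTX.mono_left inter_subset_right), add_right_comm]

lemma union_union_inter_eq_left (hP : P ⊆ T) (hTX : Disjoint T X) (hQ : Disjoint Q (T ∪ X)) :
    (P ∪ Q ∪ X) ∩ T = P := by
  rw [union_inter_distrib_right, union_inter_distrib_right, inter_eq_left.2 hP,
    disjoint_iff_inter_eq_empty.1 (disjoint_union_right.1 hQ).1,
    disjoint_iff_inter_eq_empty.1 hTX.symm, union_empty, union_empty]

lemma union_union_sdiff_eq_middle (hP : P ⊆ T) (hQ : Disjoint Q (T ∪ X)) :
    (P ∪ Q ∪ X) \ (T ∪ X) = Q := by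
  rw [union_sdiff_distrib, union_sdiff_distrib, sdiff_eq_self_of_disjoint hQ,
    sdiff_eq_empty_iff_subset.2 (hP.trans subset_union_left),
    sdiff_eq_empty_iff_subset.2 subset_union_right, empty_union, union_empty]

/-- Such a set is determined by its traces on `T` and on `V \ (T ∪ X)`. -/
lemma card_filter_superset_card_inter_eq (hT : T ⊆ V) (hX : X ⊆ V) (hTX : Disjoint T X)
    (j l : ℕ) :
    #{A ∈ V.powersetCard (j + l + #X) | X ⊆ A ∧ #(A ∩ T) = j} =
      (#T).choose j * (#(V \ (T ∪ X))).choose l := by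
  rw [← card_powersetCard, ← card_powersetCard, ← card_product]
  refine card_nbij' (fun A ↦ (A ∩ T, A \ (T ∪ X))) (fun p ↦ p.1 ∪ p.2 ∪ X) ?_ ?_ ?_ ?_
  · intro A hA
    obtain ⟨hA, hXA, hAT⟩ := mem_filter.1 hA
    obtain ⟨hAV, hAcard⟩ := mem_powersetCard.1 hA
    have hQcard : #(A \ (T ∪ X)) = l := by
      have := card_eq_card_inter_add_card_sdiff_add_card hXA hTX
      omega
    exact mem_product.2 ⟨mem_powersetCard.2 ⟨inter_subset_right, hAT⟩,
      mem_powersetCard.2 ⟨sdiff_subset_sdiff hAV subset_rfl, hQcard⟩⟩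
  · rintro ⟨P, Q⟩ hPQ
    obtain ⟨hP, hQ⟩ := mem_product.1 hPQ
    obtain ⟨hPT, rfl⟩ := mem_powersetCard.1 hP
    obtain ⟨hQV, rfl⟩ := mem_powersetCard.1 hQ
    have hQ_disj : Disjoint Q (T ∪ X) := disjoint_of_subset_left hQV sdiff_disjoint
    have htrace : (P ∪ Q ∪ X) ∩ T = P := union_union_inter_eq_left hPT hTX hQ_disj
    have hcard : #(P ∪ Q ∪ X) = #P + #Q + #X := by
      rw [card_eq_card_inter_add_card_sdiff_add_card subset_union_right hTX, htrace,
        union_union_sdiff_eq_middle hPT hQ_disj]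
    exact mem_filter.2 ⟨mem_powersetCard.2 ⟨union_subset (union_subset (hPT.trans hT)
      (hQV.trans sdiff_subset)) hX, hcard⟩, subset_union_right, congrArg card htrace⟩
  · intro A hA
    exact inter_union_sdiff_union_eq (mem_filter.1 hA).2.1
  · rintro ⟨P, Q⟩ hPQ
    obtain ⟨hP, hQ⟩ := mem_product.1 hPQ
    have hPT : P ⊆ T := (mem_powersetCard.1 hP).1
    have hQ_disj : Disjoint Q (T ∪ X) :=
      disjoint_of_subset_left (mem_powersetCard.1 hQ).1 sdiff_disjoint
    exact Prod.ext (union_union_inter_eq_left hPT hTX hQ_disj)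
      (union_union_sdiff_eq_middle hPT hQ_disj)

end Counting

section Degree

variable {n x : ℕ} {F : Finset (Finset ℕ)}

lemma minDeg_le_degree (hx : x ∈ Icc 1 n) : minDeg n F ≤ degree F x :=
  Nat.sInf_le (Set.mem_image_of_mem _ (mem_Icc.1 hx))

lemma degree_le_maxDeg (hx : x ∈ Icc 1 n) : degree F x ≤ maxDeg n F :=
  le_csSup ((Set.finite_Icc 1 n).image _).bddAbove (Set.mem_image_of_mem _ (mem_Icc.1 hx))

end Degree

/-- The `(k + 2)`-subsets of `[n]` that lie inside the core `T`, or contain the center `c` and at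
least `k` elements of `T`. The member size `r` is written `k + 2`, so that `r - 2` involves no
truncated subtraction. -/
def coreStarFamily (n k : ℕ) (T : Finset ℕ) (c : ℕ) : Finset (Finset ℕ) :=
  {A ∈ (Icc 1 n).powersetCard (k + 2) | A ⊆ T ∨ c ∈ A ∧ k ≤ #(A ∩ T)}

namespace coreStarFamily

variable {n k c x : ℕ} {T A : Finset ℕ}

lemma mem_iff : A ∈ coreStarFamily n k T c ↔
    (A ⊆ Icc 1 n ∧ #A = k + 2) ∧ (A ⊆ T ∨ c ∈ A ∧ k ≤ #(A ∩ T)) := by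
  simp only [coreStarFamily, mem_filter, mem_powersetCard]

lemma isFamily : IsFamily n (k + 2) (coreStarFamily n k T c) :=
  fun _ hA ↦ (mem_iff.1 hA).1

lemma isIntersecting (hT : #T ≤ 2 * k + 1) : IsIntersecting (coreStarFamily n k T c) := by
  have inter_nonempty {A B : Finset ℕ} (hAT : A ⊆ T) (hA : #A = k + 2) (hB : k ≤ #(B ∩ T)) :
      (A ∩ B).Nonempty :=
    (inter_nonempty_of_card_lt_card_add_card hAT inter_subset_right (by omega)).mono
      (inter_subset_inter_left inter_subset_left)
  have le_card_inter {A : Finset ℕ} (hAT : A ⊆ T) (hA : #A = k + 2) : k ≤ #(A ∩ T) := by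
    rw [inter_eq_left.2 hAT]
    omega
  intro A hA B hB
  obtain ⟨⟨-, hAcard⟩, hA⟩ := mem_iff.1 hA
  obtain ⟨⟨-, hBcard⟩, hB⟩ := mem_iff.1 hB
  rcases hA with hAT | ⟨hcA, hAT⟩ <;> rcases hB with hBT | ⟨hcB, hBT⟩
  · exact inter_nonempty hAT hAcard (le_card_inter hBT hBcard)
  · exact inter_nonempty hAT hAcard hBT
  · exact inter_comm B A ▸ inter_nonempty hBT hBcard hAT
  · exact ⟨c, mem_inter.2 ⟨hcA, hcB⟩⟩

lemma exists_mem_between {S W : Finset ℕ} (hcS : c ∈ S) (hS : k ≤ #(S ∩ T)) (hSW : S ⊆ W)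
    (hW : W ⊆ Icc 1 n) (hScard : #S ≤ k + 2) (hWcard : k + 2 ≤ #W) :
    ∃ A ∈ coreStarFamily n k T c, S ⊆ A ∧ A ⊆ W := by
  obtain ⟨A, hSA, hAW, hAcard⟩ := exists_subsuperset_card_eq hSW hScard hWcard
  exact ⟨A, mem_iff.2 ⟨⟨hAW.trans hW, hAcard⟩, .inr ⟨hSA hcS,
    hS.trans (card_le_card (inter_subset_inter_right hSA))⟩⟩, hSA, hAW⟩

lemma exists_mem_disjoint (hT : T ⊆ Icc 1 n) (hTcard : 2 * k + 1 ≤ #T) (hc : c ∈ Icc 1 n)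
    (hn : 2 * (k + 2) ≤ n) {G : Finset ℕ} (hG : G ⊆ Icc 1 n) (hGcard : #G = k + 2)
    (hGF : G ∉ coreStarFamily n k T c) :
    ∃ A ∈ coreStarFamily n k T c, Disjoint A G := by
  have hGT : ¬G ⊆ T ∧ (c ∈ G → #(G ∩ T) < k) := by
    simpa only [mem_iff, hG, hGcard, true_and, and_self, not_or, not_and, not_le] using hGF
  have hsplit : #(T \ G) + #(G ∩ T) = #T := inter_comm T G ▸ card_sdiff_add_card_inter T G
  by_cases hcG : c ∈ G
  · have hlt := hGT.2 hcG
    obtain ⟨A, hA, hAcard⟩ := exists_subset_card_eq (s := T \ G) (n := k + 2) (by omega)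
    have hAT : A ⊆ T := hA.trans sdiff_subset
    exact ⟨A, mem_iff.2 ⟨⟨hAT.trans hT, hAcard⟩, .inl hAT⟩,
      disjoint_of_subset_left hA sdiff_disjoint⟩
  · have hlt : #(G ∩ T) < #G :=
      card_lt_card (inter_subset_left.ssubset_of_ne (mt inter_eq_left.1 hGT.1))
    obtain ⟨C, hC, hCcard⟩ := exists_subset_card_eq (s := T \ G) (n := k) (by omega)
    have hCT : C ⊆ (insert c C) ∩ T :=
      subset_inter (subset_insert _ _) (hC.trans sdiff_subset)
    have hCG : insert c C ⊆ Icc 1 n \ G :=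
      insert_subset (mem_sdiff.2 ⟨hc, hcG⟩) (hC.trans (sdiff_subset_sdiff hT subset_rfl))
    have hGc : k + 2 ≤ #(Icc 1 n \ G) := by
      rw [card_sdiff_of_subset hG, Nat.card_Icc]
      omega
    obtain ⟨A, hA, -, hAG⟩ := exists_mem_between (mem_insert_self c C)
      (hCcard.symm.le.trans (card_le_card hCT)) hCG sdiff_subset
      ((card_insert_le c C).trans (by omega)) hGc
    exact ⟨A, hA, disjoint_of_subset_left hAG sdiff_disjoint⟩

lemma isMaxIntersecting (hT : T ⊆ Icc 1 n) (hTcard : #T = 2 * k + 1) (hc : c ∈ Icc 1 n)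
    (hn : 2 * (k + 2) ≤ n) : IsMaxIntersecting n (k + 2) (coreStarFamily n k T c) := by
  refine ⟨isIntersecting hTcard.le, fun G hG hGcard hGF ↦ ?_⟩
  obtain ⟨A, hA, hAG⟩ := exists_mem_disjoint hT hTcard.ge hc hn hG hGcard hGF
  exact ⟨A, hA, disjoint_iff_inter_eq_empty.1 hAG⟩

lemma covers (hT : T ⊆ Icc 1 n) (hTcard : k ≤ #T) (hc : c ∈ Icc 1 n) (hn : k + 2 ≤ n) :
    Covers n (coreStarFamily n k T c) := by
  intro x hx
  obtain ⟨C, hCT, hCcard⟩ := exists_subset_card_eq hTcard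
  have hC : C ⊆ insert c (insert x C) ∩ T :=
    subset_inter ((subset_insert x C).trans (subset_insert c _)) hCT
  obtain ⟨A, hA, hSA, -⟩ := exists_mem_between (mem_insert_self c (insert x C))
    (hCcard.symm.le.trans (card_le_card hC))
    (insert_subset hc (insert_subset hx (hCT.trans hT))) subset_rfl
    ((card_insert_le _ _).trans (Nat.succ_le_succ ((card_insert_le _ _).trans (by omega))))
    (by rwa [Nat.card_Icc, Nat.add_sub_cancel])
  exact ⟨A, hA, hSA (mem_insert_of_mem (mem_insert_self x C))⟩

lemma card_inter_add_card_le {S : Finset ℕ} (hA : A ∈ coreStarFamily n k T c) (hS : S ⊆ A)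
    (hST : Disjoint S T) : #(A ∩ T) + #S ≤ k + 2 := by
  rw [← (isFamily A hA).2, ← card_union_of_disjoint (hST.symm.mono_left inter_subset_right)]
  exact card_le_card (union_subset inter_subset_left hS)

lemma degree_center (hT : T ⊆ Icc 1 n) (hc : c ∈ Icc 1 n) (hcT : c ∉ T) :
    degree (coreStarFamily n k T c) c =
      (#T).choose k * (n - (#T + 1)) + (#T).choose (k + 1) := by
  have hX : {c} ⊆ Icc 1 n := singleton_subset_iff.2 hc
  have hTX : Disjoint T {c} := disjoint_singleton_right.2 hcT
  have split_by_trace : {A ∈ coreStarFamily n k T c | c ∈ A} =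
      {A ∈ (Icc 1 n).powersetCard (k + 2) | {c} ⊆ A ∧ #(A ∩ T) = k} ∪
        {A ∈ (Icc 1 n).powersetCard (k + 2) | {c} ⊆ A ∧ #(A ∩ T) = k + 1} := by
    ext A
    simp only [mem_union, mem_filter, mem_iff, mem_powersetCard, singleton_subset_iff]
    constructor
    · rintro ⟨⟨hA, h⟩, hcA⟩
      have hle := card_inter_add_card_le (mem_iff.2 ⟨hA, h⟩) (singleton_subset_iff.2 hcA) hTX.symm
      have hge : k ≤ #(A ∩ T) := h.elim (fun hAT ↦ absurd (hAT hcA) hcT) And.right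
      rw [card_singleton] at hle
      obtain h | h : #(A ∩ T) = k ∨ #(A ∩ T) = k + 1 := by omega
      exacts [.inl ⟨hA, hcA, h⟩, .inr ⟨hA, hcA, h⟩]
    · rintro (⟨hA, hcA, h⟩ | ⟨hA, hcA, h⟩) <;> exact ⟨⟨hA, .inr ⟨hcA, by omega⟩⟩, hcA⟩
  have houtside : #(Icc 1 n \ (T ∪ {c})) = n - (#T + 1) := by
    rw [card_sdiff_of_subset (union_subset hT hX), card_union_of_disjoint hTX, Nat.card_Icc,
      card_singleton, Nat.add_sub_cancel]
  have hcount_k := card_filter_superset_card_inter_eq hT hX hTX k 1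
  have hcount_succ := card_filter_superset_card_inter_eq hT hX hTX (k + 1) 0
  rw [houtside, card_singleton, Nat.choose_one_right] at hcount_k
  rw [card_singleton, Nat.choose_zero_right, mul_one] at hcount_succ
  rw [degree, split_by_trace, card_union_of_disjoint, hcount_k, hcount_succ]
  exact disjoint_filter.2 fun A _ hk hsucc ↦ by omega

lemma degree_of_notMem_core (hT : T ⊆ Icc 1 n) (hc : c ∈ Icc 1 n) (hcT : c ∉ T)
    (hx : x ∈ Icc 1 n) (hxT : x ∉ T) (hxc : x ≠ c) :
    degree (coreStarFamily n k T c) x = (#T).choose k := by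
  have hX : {x, c} ⊆ Icc 1 n := insert_subset hx (singleton_subset_iff.2 hc)
  have hTX : Disjoint T {x, c} :=
    disjoint_insert_right.2 ⟨hxT, disjoint_singleton_right.2 hcT⟩
  have filter_eq : {A ∈ coreStarFamily n k T c | x ∈ A} =
      {A ∈ (Icc 1 n).powersetCard (k + 2) | {x, c} ⊆ A ∧ #(A ∩ T) = k} := by
    ext A
    simp only [mem_filter, mem_iff, mem_powersetCard, insert_subset_iff, singleton_subset_iff]
    constructor
    · rintro ⟨⟨hA, h⟩, hxA⟩
      obtain ⟨hcA, hge⟩ := h.resolve_left fun hAT ↦ hxT (hAT hxA)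
      have hle := card_inter_add_card_le (mem_iff.2 ⟨hA, h⟩)
        (insert_subset hxA (singleton_subset_iff.2 hcA)) hTX.symm
      rw [card_pair hxc] at hle
      exact ⟨hA, ⟨hxA, hcA⟩, by omega⟩
    · rintro ⟨hA, ⟨hxA, hcA⟩, h⟩
      exact ⟨⟨hA, .inr ⟨hcA, h.ge⟩⟩, hxA⟩
  have hcount := card_filter_superset_card_inter_eq hT hX hTX k 0
  rw [card_pair hxc, Nat.choose_zero_right, mul_one] at hcount
  rw [degree, filter_eq, ← hcount, Nat.add_zero]

end coreStarFamily

theorem exists_unbalanced_family_general (n r : ℕ) (hr : 2 ≤ r) (hn : 2 * r ≤ n) :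
    ∃ F : Finset (Finset ℕ), IsFamily n r F ∧ IsMaxIntersecting n r F ∧ Covers n F ∧
      (n - 2 * r + 3) * minDeg n F ≤ maxDeg n F := by
  obtain ⟨k, rfl⟩ := Nat.exists_eq_add_of_le' hr
  set T := Icc 2 (2 * k + 2)
  have hT : T ⊆ Icc 1 n := Icc_subset_Icc (by omega) (by omega)
  have hTcard : #T = 2 * k + 1 := by rw [Nat.card_Icc]; omega
  have h1 : 1 ∈ Icc 1 n := mem_Icc.2 ⟨le_rfl, by omega⟩
  have h1T : 1 ∉ T := by simp [T]
  have hn_mem : n ∈ Icc 1 n := mem_Icc.2 ⟨by omega, le_rfl⟩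
  have hnT : n ∉ T := by simp only [T, mem_Icc]; omega
  refine ⟨coreStarFamily n k T 1, coreStarFamily.isFamily,
    coreStarFamily.isMaxIntersecting hT hTcard h1 hn,
    coreStarFamily.covers hT (by omega) h1 (by omega), ?_⟩
  calc (n - 2 * (k + 2) + 3) * minDeg n (coreStarFamily n k T 1)
      ≤ (n - 2 * (k + 2) + 3) * degree (coreStarFamily n k T 1) n := by
        gcongr
        exact minDeg_le_degree hn_mem
    _ = degree (coreStarFamily n k T 1) 1 := by
        rw [coreStarFamily.degree_of_notMem_core hT h1 h1T hn_mem hnT (by omega),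
          coreStarFamily.degree_center hT h1 h1T, hTcard, Nat.choose_symm_half,
          show n - 2 * (k + 2) + 3 = n - (2 * k + 1 + 1) + 1 by omega]
        ring
    _ ≤ maxDeg n (coreStarFamily n k T 1) := degree_le_maxDeg h1

/-- For `r ≥ 3` and `2r + 2 < n` there is a maximal intersecting family `F`
of `r`-subsets of `[n]` with `∪F = [n]` such that
`Δ(F)·C(2r−3, r−2) ≥ (n−2r+3)·C(2r−3, r−2)·δ(F) − (n−2r+2)·δ(F)`
(stated additively to avoid truncated subtraction of the two sides). -/
theorem exists_unbalanced_family (n r : ℕ) (hr : 3 ≤ r) (hn : 2 * r + 2 < n) :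
    ∃ F : Finset (Finset ℕ), IsFamily n r F ∧ IsMaxIntersecting n r F ∧ Covers n F ∧
      (n - 2 * r + 3) * Nat.choose (2 * r - 3) (r - 2) * minDeg n F ≤
        maxDeg n F * Nat.choose (2 * r - 3) (r - 2) + (n - 2 * r + 2) * minDeg n F := by
  obtain ⟨F, hF, hmax, hcov, hdeg⟩ :=
    exists_unbalanced_family_general n r (by omega) (by omega)
  exact ⟨F, hF, hmax, hcov, (mul_right_comm _ _ _).trans_le
    ((Nat.mul_le_mul_right _ hdeg).trans (Nat.le_add_right _ _))⟩
end

section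
/- Let n, r be positive integers with r ≤ n and let F be a nonempty intersecting family of r-element subsets of [n] whose covering number equals r, i.e., every subset T of [n] with |T| ≤ r − 1 is disjoint from some member of F. Then |F| ≤ r^r. -/
/-!
If a family has covering number `r`, a set of size less than `r` misses some member `B`, so every
cover containing that set also contains an element of `B`. Branching over the at most `r` elements
of `B` and repeating this `r` times, starting from `∅`, reaches sets of size `r`, each of which is
contained in at most one cover of size `r`. Hence there are at most `r ^ r` covers of size `r`, and
in an intersecting family every member is a cover.
-/

section Covers

open Finset

variable {α : Type*} [DecidableEq α] {F : Finset (Finset α)} {G : Set (Finset α)}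
  {B T X : Finset α} {k r s : ℕ}

/-- `T` is a cover (transversal) of the family `G`: it meets every member of `G`. A lower bound `r`
on the covering number of `G` is expressed as `∀ T, IsCover G T → r ≤ #T`. -/
def IsCover (G : Set (Finset α)) (T : Finset α) : Prop :=
  ∀ B ∈ G, (T ∩ B).Nonempty

theorem IsCover.inter_of_forall_subset (hT : IsCover G T) (hX : ∀ B ∈ G, B ⊆ X) :
    IsCover G (T ∩ X) := by
  intro B hB
  rw [inter_assoc, inter_eq_right.mpr (hX B hB)]
  exact hT B hB

theorem exists_disjoint_of_not_isCover (hT : ¬ IsCover G T) : ∃ B ∈ G, Disjoint T B := by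
  simpa only [IsCover, not_forall, exists_prop, not_nonempty_iff_eq_empty,
    ← disjoint_iff_inter_eq_empty] using hT

theorem card_filter_superset_le_one (hF : ∀ A ∈ F, #A ≤ #T) : #{A ∈ F | T ⊆ A} ≤ 1 := by
  have eq_of_mem : ∀ A ∈ F, T ⊆ A → T = A := fun A hA hTA =>
    eq_of_subset_of_card_le hTA (hF A hA)
  simp only [card_le_one, mem_filter]
  rintro A ⟨hA, hTA⟩ A' ⟨hA', hTA'⟩
  exact (eq_of_mem A hA hTA).symm.trans (eq_of_mem A' hA' hTA')

theorem filter_superset_subset_biUnion_insert (hB : ∀ A ∈ F, (A ∩ B).Nonempty) :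
    {A ∈ F | T ⊆ A} ⊆ B.biUnion fun x => {A ∈ F | insert x T ⊆ A} := by
  intro A hA
  obtain ⟨hAF, hTA⟩ := mem_filter.mp hA
  obtain ⟨x, hx⟩ := hB A hAF
  obtain ⟨hxA, hxB⟩ := mem_inter.mp hx
  exact mem_biUnion.mpr ⟨x, hxB, mem_filter.mpr ⟨hAF, insert_subset hxA hTA⟩⟩

theorem card_filter_superset_le_pow (hG : ∀ B ∈ G, #B ≤ s) (hτ : ∀ T, IsCover G T → r ≤ #T)
    (hF : ∀ A ∈ F, IsCover G A) (hFr : ∀ A ∈ F, #A ≤ r) (hT : #T + k = r) :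
    #{A ∈ F | T ⊆ A} ≤ s ^ k := by
  induction k generalizing T with
  | zero =>
    simpa only [pow_zero] using
      card_filter_superset_le_one fun A hA => (hFr A hA).trans_eq hT.symm
  | succ k ih =>
    have hT_not_cover : ¬ IsCover G T := fun h => by
      have := hτ T h
      omega
    obtain ⟨B, hB, hTB⟩ := exists_disjoint_of_not_isCover hT_not_cover
    have card_insert_branch : ∀ x ∈ B, #{A ∈ F | insert x T ⊆ A} ≤ s ^ k := by
      intro x hx
      apply ih
      rw [card_insert_of_notMem (disjoint_right.mp hTB hx)]
      omega
    calc #{A ∈ F | T ⊆ A}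
        ≤ #(B.biUnion fun x => {A ∈ F | insert x T ⊆ A}) :=
          card_le_card (filter_superset_subset_biUnion_insert fun A hA => hF A hA B hB)
      _ ≤ #B * s ^ k := card_biUnion_le_card_mul _ _ _ card_insert_branch
      _ ≤ s * s ^ k := Nat.mul_le_mul_right _ (hG B hB)
      _ = s ^ (k + 1) := (pow_succ' s k).symm

theorem le_card_of_isCover_of_forall_subset (hX : ∀ B ∈ G, B ⊆ X)
    (hcov : ∀ T ⊆ X, #T ≤ r - 1 → ∃ B ∈ G, B ∩ T = ∅) (hT : IsCover G T) : r ≤ #T := by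
  by_contra! hlt
  have hcard : #(T ∩ X) ≤ r - 1 := (card_le_card inter_subset_left).trans (Nat.le_sub_one_of_lt hlt)
  obtain ⟨B, hB, hBT⟩ := hcov (T ∩ X) inter_subset_right hcard
  have hmeet : (T ∩ X ∩ B).Nonempty := hT.inter_of_forall_subset hX B hB
  exact hmeet.ne_empty (inter_comm B _ ▸ hBT)

theorem card_le_pow_of_covering_number_eq_general (hG : ∀ B ∈ G, #B ≤ s)
    (hτ : ∀ T, IsCover G T → r ≤ #T) (hF : ∀ A ∈ F, IsCover G A) (hFr : ∀ A ∈ F, #A ≤ r) :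
    #F ≤ s ^ r := by
  simpa only [empty_subset, filter_true] using
    card_filter_superset_le_pow (T := ∅) hG hτ hF hFr (by rw [card_empty, zero_add])

end Covers

/-- A nonempty intersecting family `F` of `r`-subsets of `[n]` with covering
number `r` (every set of size at most `r − 1` misses some member of `F`) has at most
`r^r` members. -/
theorem card_le_pow_of_covering_number_eq (n r : ℕ) (hr : 1 ≤ r) (hrn : r ≤ n)
    (F : Finset (Finset ℕ)) (hne : F.Nonempty) (hfam : IsFamily n r F)
    (hint : IsIntersecting F)
    (hcov : ∀ T ⊆ Finset.Icc 1 n, T.card ≤ r - 1 → ∃ A ∈ F, A ∩ T = ∅) :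
    F.card ≤ r ^ r := by
  have hcard : ∀ A ∈ F, A.card ≤ r := fun A hA => (hfam A hA).2.le
  exact card_le_pow_of_covering_number_eq_general (G := (F : Set (Finset ℕ))) hcard
    (fun _ => le_card_of_isCover_of_forall_subset (fun A hA => (hfam A hA).1) hcov) hint hcard
end

section
/- Let n, r be integers with r ≥ 3 and 2r + 2 < n. Set S = {2, 3, …, 2r−2} and S₀ = {2, 3, …, r−1}, and define F₁ = {{1} ∪ G : G an (r−1)-element subset of S}, F₂ = {{1, i} ∪ H : 2r−1 ≤ i ≤ n, H an (r−2)-element subset of S with H ≠ S₀}, F₃ = the family of all r-element subsets of S, F₄ = {(S \ S₀) ∪ {i} : 2r−1 ≤ i ≤ n}, and F = F₁ ∪ F₂ ∪ F₃ ∪ F₄. Then F is a maximal intersecting family of r-element subsets of [n]. -/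
/-- `S = {2, …, 2r−2}`. -/
def Sset (r : ℕ) : Finset ℕ := Finset.Icc 2 (2 * r - 2)

/-- `S₀ = {2, …, r−1}`. -/
def S0set (r : ℕ) : Finset ℕ := Finset.Icc 2 (r - 1)

/-- `F₁ = {{1} ∪ G : G ∈ binom(S, r−1)}`. -/
def Fam1 (r : ℕ) : Finset (Finset ℕ) :=
  ((Sset r).powersetCard (r - 1)).image (fun G => insert 1 G)

/-- `F₂ = {{1, i} ∪ H : 2r−1 ≤ i ≤ n, H ∈ binom(S, r−2), H ≠ S₀}`. -/
def Fam2 (n r : ℕ) : Finset (Finset ℕ) :=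
  ((Finset.Icc (2 * r - 1) n) ×ˢ
      (((Sset r).powersetCard (r - 2)).filter (fun H => H ≠ S0set r))).image
    (fun p => insert 1 (insert p.1 p.2))

/-- `F₃ = binom(S, r)`. -/
def Fam3 (r : ℕ) : Finset (Finset ℕ) := (Sset r).powersetCard r

/-- `F₄ = {(S \ S₀) ∪ {i} : 2r−1 ≤ i ≤ n}`. -/
def Fam4 (n r : ℕ) : Finset (Finset ℕ) :=
  (Finset.Icc (2 * r - 1) n).image (fun i => insert i (Sset r \ S0set r))

/-- `F = F₁ ∪ F₂ ∪ F₃ ∪ F₄`. -/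
def FamConstr (n r : ℕ) : Finset (Finset ℕ) := Fam1 r ∪ Fam2 n r ∪ Fam3 r ∪ Fam4 n r

/-!
Let `C = {1} ∪ S`, a set of `2(r - 1)` points. Then `F₁ ∪ F₃` consists of all `r`-subsets of `C`,
while `F₂ ∪ F₄` consists of the sets `{i} ∪ B` with `i` outside `C` and `B` in a family `𝓗` of
`(r - 1)`-subsets of `C`. This `𝓗` contains exactly one member of each complementary pair
`{B, C \ B}`: it is the star of `1` in which `{1} ∪ S₀` is exchanged for its complement `S \ S₀`.

Any such `𝓗` gives a maximal intersecting family if at least two points lie outside `C`. All members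
of the family have at least `r - 1` points in `C`, so disjoint members would have complementary
traces on `C`, both in `𝓗`. An `r`-set `G` outside the family has at most `r - 1` points in `C`. If
it has exactly `r - 1`, then `C \ G` belongs to `𝓗` and extends to a member avoiding `G` by a point
outside `C ∪ G`; if it has fewer, then `C \ G` contains an `r`-set.
-/

open Finset

section ComplTransversal

variable {α : Type*} [DecidableEq α] {C X B : Finset α} {𝓗 : Finset (Finset α)} {k : ℕ} {a : α}

theorem sdiff_mem_powersetCard (hC : #C = 2 * k) (hB : B ∈ powersetCard k C) :
    C \ B ∈ powersetCard k C := by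
  obtain ⟨hBC, hBcard⟩ := mem_powersetCard.1 hB
  rw [mem_powersetCard, card_sdiff_of_subset hBC, hC, hBcard]
  exact ⟨sdiff_subset, by omega⟩

/-- `𝓗` is a choice of one set from each complementary pair of `k`-subsets of the `2k`-set `C`. -/
structure IsComplTransversal (C : Finset α) (k : ℕ) (𝓗 : Finset (Finset α)) : Prop where
  card_eq : #C = 2 * k
  subset_powersetCard : 𝓗 ⊆ powersetCard k C
  mem_iff_sdiff_notMem : ∀ B ∈ powersetCard k C, B ∈ 𝓗 ↔ C \ B ∉ 𝓗

/-- The family of all `(k + 1)`-subsets of `C` and all sets `{i} ∪ B` with `i ∈ X` and `B ∈ 𝓗`. It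
is meant for `X` disjoint from `C` and `𝓗` a complementary transversal of the `k`-subsets of `C`. -/
def transversalFamily (C X : Finset α) (k : ℕ) (𝓗 : Finset (Finset α)) : Finset (Finset α) :=
  powersetCard (k + 1) C ∪ image₂ insert X 𝓗

theorem mem_transversalFamily (hCX : Disjoint C X) (h𝓗 : 𝓗 ⊆ powersetCard k C) {A : Finset α} :
    A ∈ transversalFamily C X k 𝓗 ↔ (A ⊆ C ∪ X ∧ #A = k + 1) ∧ (A ⊆ C ∨ C ∩ A ∈ 𝓗) := by
  simp only [transversalFamily, mem_union, mem_powersetCard, mem_image₂]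
  constructor
  · rintro (⟨hAC, hA⟩ | ⟨i, hiX, B, hB, rfl⟩)
    · exact ⟨⟨hAC.trans subset_union_left, hA⟩, .inl hAC⟩
    · obtain ⟨hBC, hBcard⟩ := mem_powersetCard.1 (h𝓗 hB)
      have hiC : i ∉ C := disjoint_right.1 hCX hiX
      refine ⟨⟨insert_subset (mem_union_right _ hiX) (hBC.trans subset_union_left), ?_⟩, .inr ?_⟩
      · rw [card_insert_of_notMem (notMem_mono hBC hiC), hBcard]
      · rwa [inter_insert_of_notMem hiC, inter_eq_right.2 hBC]
  · rintro ⟨⟨hA, hAcard⟩, hAC | hAC⟩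
    · exact .inl ⟨hAC, hAcard⟩
    · have hsplit := card_inter_add_card_sdiff A C
      rw [inter_comm, (mem_powersetCard.1 (h𝓗 hAC)).2, hAcard, Nat.add_left_cancel_iff] at hsplit
      obtain ⟨i, hi⟩ := card_eq_one.1 hsplit
      have hiA : i ∈ A \ C := by simp only [hi, mem_singleton]
      have hiX : i ∈ X := sdiff_le_iff.2 hA hiA
      exact .inr ⟨i, hiX, C ∩ A, hAC, by
        rw [insert_eq, ← hi, inter_comm, sdiff_union_inter]⟩

namespace IsComplTransversal

theorem card_of_mem (h𝓗 : IsComplTransversal C k 𝓗) (hB : B ∈ 𝓗) : #B = k :=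
  (mem_powersetCard.1 (h𝓗.subset_powersetCard hB)).2

theorem intersecting (h𝓗 : IsComplTransversal C k 𝓗) : (𝓗 : Set (Finset α)).Intersecting := by
  intro A hA B hB hdisj
  have hAC := h𝓗.subset_powersetCard hA
  obtain ⟨hBC, hBcard⟩ := mem_powersetCard.1 (h𝓗.subset_powersetCard hB)
  have hBA : B = C \ A :=
    eq_of_subset_of_card_le (subset_sdiff.2 ⟨hBC, hdisj.symm⟩)
      (by rw [(mem_powersetCard.1 (sdiff_mem_powersetCard h𝓗.card_eq hAC)).2, hBcard])
  exact (h𝓗.mem_iff_sdiff_notMem A hAC).1 hA (hBA ▸ hB)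

theorem star (hC : #C = 2 * k) (ha : a ∈ C) :
    IsComplTransversal C k {B ∈ powersetCard k C | a ∈ B} where
  card_eq := hC
  subset_powersetCard := filter_subset _ _
  mem_iff_sdiff_notMem B hB := by
    have hcard : #(C \ B) = k := (mem_powersetCard.1 (sdiff_mem_powersetCard hC hB)).2
    simp [hB, hcard, ha]

theorem exchange (h𝓗 : IsComplTransversal C k 𝓗) (hB : B ∈ 𝓗) :
    IsComplTransversal C k (insert (C \ B) (𝓗.erase B)) where
  card_eq := h𝓗.card_eq
  subset_powersetCard :=
    insert_subset (sdiff_mem_powersetCard h𝓗.card_eq (h𝓗.subset_powersetCard hB))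
      ((erase_subset _ _).trans h𝓗.subset_powersetCard)
  mem_iff_sdiff_notMem T hT := by
    have hB𝓟 := h𝓗.subset_powersetCard hB
    have hTC : T ≤ C := (mem_powersetCard.1 hT).1
    have hBC : B ≤ C := (mem_powersetCard.1 hB𝓟).1
    have hTB : C \ T = C \ B ↔ T = B := sdiff_right_inj hTC hBC
    have hTB' : C \ T = B ↔ T = C \ B := (sdiff_eq_comm hTC hBC).trans eq_comm
    have hBB : C \ B ≠ B := fun h ↦ (h𝓗.mem_iff_sdiff_notMem B hB𝓟).1 hB (h.symm ▸ hB)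
    have hTcompl := h𝓗.mem_iff_sdiff_notMem T hT
    simp only [mem_insert, mem_erase]
    grind

theorem le_card_inter_of_mem_transversalFamily (h𝓗 : IsComplTransversal C k 𝓗)
    (hCX : Disjoint C X) {A : Finset α} (hA : A ∈ transversalFamily C X k 𝓗) : k ≤ #(C ∩ A) := by
  obtain ⟨⟨-, hAcard⟩, hAC | hAC⟩ := (mem_transversalFamily hCX h𝓗.subset_powersetCard).1 hA
  · rw [inter_eq_right.2 hAC]
    omega
  · exact (h𝓗.card_of_mem hAC).ge

theorem intersecting_transversalFamily (h𝓗 : IsComplTransversal C k 𝓗) (hCX : Disjoint C X) :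
    (transversalFamily C X k 𝓗 : Set (Finset α)).Intersecting := by
  have not_disjoint_of_subset {A B : Finset α} (hA : A ∈ transversalFamily C X k 𝓗)
      (hB : B ∈ transversalFamily C X k 𝓗) (hAC : A ⊆ C) : ¬Disjoint A B := by
    have hAcard := ((mem_transversalFamily hCX h𝓗.subset_powersetCard).1 hA).1.2
    have hBcard := h𝓗.le_card_inter_of_mem_transversalFamily hCX hB
    have hcard : #C < #A + #(C ∩ B) := by rw [h𝓗.card_eq]; omega
    exact fun hdisj ↦ not_disjoint_iff_nonempty_inter.2
      (inter_nonempty_of_card_lt_card_add_card hAC inter_subset_left hcard)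
      (hdisj.mono_right inter_subset_right)
  intro A hA B hB
  obtain ⟨-, hAC | hAC⟩ := (mem_transversalFamily hCX h𝓗.subset_powersetCard).1 hA
  · exact not_disjoint_of_subset hA hB hAC
  obtain ⟨-, hBC | hBC⟩ := (mem_transversalFamily hCX h𝓗.subset_powersetCard).1 hB
  · exact fun hdisj ↦ not_disjoint_of_subset hB hA hBC hdisj.symm
  · exact fun hdisj ↦ h𝓗.intersecting hAC hBC (hdisj.mono inter_subset_right inter_subset_right)

theorem exists_disjoint_of_notMem_transversalFamily (h𝓗 : IsComplTransversal C k 𝓗)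
    (hCX : Disjoint C X) (hX : 1 < #X) {G : Finset α} (hGsub : G ⊆ C ∪ X) (hGcard : #G = k + 1)
    (hG : G ∉ transversalFamily C X k 𝓗) : ∃ A ∈ transversalFamily C X k 𝓗, Disjoint A G := by
  rw [mem_transversalFamily hCX h𝓗.subset_powersetCard, and_iff_right ⟨hGsub, hGcard⟩,
    not_or] at hG
  obtain ⟨hGC, hG𝓗⟩ := hG
  have hsplitG := card_inter_add_card_sdiff G C
  have hsplitC := card_inter_add_card_sdiff C G
  have hout : 0 < #(G \ C) := card_pos.2 (sdiff_nonempty.2 hGC)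
  rw [inter_comm] at hsplitG
  rw [h𝓗.card_eq] at hsplitC
  rcases eq_or_ne #(C ∩ G) k with htrace | htrace
  · have hcompl : C \ G ∈ 𝓗 := by
      by_contra hnot
      rw [← sdiff_inter_self_left] at hnot
      exact hG𝓗 ((h𝓗.mem_iff_sdiff_notMem _
        (mem_powersetCard.2 ⟨inter_subset_left, htrace⟩)).2 hnot)
    obtain ⟨i, hiX, hiG⟩ : ∃ i ∈ X, i ∉ G \ C := exists_mem_notMem_of_card_lt_card (by omega)
    have hiG : i ∉ G := fun hi ↦ hiG (mem_sdiff.2 ⟨hi, disjoint_right.1 hCX hiX⟩)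
    exact ⟨insert i (C \ G), mem_union_right _ (mem_image₂_of_mem hiX hcompl),
      disjoint_insert_left.2 ⟨hiG, sdiff_disjoint⟩⟩
  · obtain ⟨A, hA, hAcard⟩ : ∃ A ⊆ C \ G, #A = k + 1 := exists_subset_card_eq (by omega)
    exact ⟨A, mem_union_left _ (mem_powersetCard.2 ⟨hA.trans sdiff_subset, hAcard⟩),
      sdiff_disjoint.mono_left hA⟩

end IsComplTransversal

theorem filter_mem_powersetCard_succ_insert {S : Finset α} (ha : a ∉ S) (k : ℕ) :
    {B ∈ powersetCard (k + 1) (insert a S) | a ∈ B} = (powersetCard k S).image (insert a) := by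
  rw [powersetCard_succ_insert ha, filter_union, filter_false_of_mem, empty_union,
    filter_true_of_mem]
  · exact forall_mem_image.2 fun B _ ↦ mem_insert_self a B
  · exact fun B hB haB ↦ ha ((mem_powersetCard.1 hB).1 haB)

theorem erase_image_insert_powersetCard {S T : Finset α} (ha : a ∉ S) (hT : T ⊆ S) (k : ℕ) :
    ((powersetCard k S).image (insert a)).erase (insert a T) =
      {H ∈ powersetCard k S | H ≠ T}.image (insert a) := by
  have insert_inj {H : Finset α} (hH : H ⊆ S) : insert a H = insert a T ↔ H = T :=
    insert_erase_invOn.2.injOn.eq_iff (notMem_mono hH ha) (notMem_mono hT ha)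
  ext B
  simp only [mem_erase, mem_image, mem_filter, mem_powersetCard]
  grind

end ComplTransversal

section Construction

/-- The complementary transversal of the `(r - 1)`-subsets of `{1} ∪ S` underlying `FamConstr n r`:
the star of `1`, in which `{1} ∪ S₀` is exchanged for its complement `S \ S₀`. -/
def exchangedStar (r : ℕ) : Finset (Finset ℕ) :=
  insert (Sset r \ S0set r)
    ({H ∈ powersetCard (r - 2) (Sset r) | H ≠ S0set r}.image (insert 1))

variable {n r : ℕ}

theorem one_notMem_Sset : 1 ∉ Sset r := by
  simp [Sset]

theorem S0set_subset_Sset : S0set r ⊆ Sset r :=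
  Icc_subset_Icc le_rfl (by omega)

theorem card_S0set : #(S0set r) = r - 2 := by
  rw [S0set, Nat.card_Icc]
  omega

theorem card_insert_one_Sset (hr : 2 ≤ r) : #(insert 1 (Sset r)) = 2 * (r - 1) := by
  rw [card_insert_of_notMem one_notMem_Sset, Sset, Nat.card_Icc]
  omega

theorem disjoint_insert_one_Sset_Icc (hr : 2 ≤ r) :
    Disjoint (insert 1 (Sset r)) (Icc (2 * r - 1) n) := by
  simp only [disjoint_left, Sset, mem_insert, mem_Icc]
  omega

theorem insert_one_Sset_union_Icc (hr : 2 ≤ r) (hn : 2 * r - 2 ≤ n) :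
    insert 1 (Sset r) ∪ Icc (2 * r - 1) n = Icc 1 n := by
  ext x
  simp only [Sset, mem_union, mem_insert, mem_Icc]
  omega

theorem isComplTransversal_exchangedStar (hr : 2 ≤ r) :
    IsComplTransversal (insert 1 (Sset r)) (r - 1) (exchangedStar r) := by
  have hstar := IsComplTransversal.star (card_insert_one_Sset hr) (mem_insert_self 1 _)
  have hS₀ : insert 1 (S0set r) ∈ (powersetCard (r - 2) (Sset r)).image (insert 1) :=
    mem_image_of_mem _ (mem_powersetCard.2 ⟨S0set_subset_Sset, card_S0set⟩)
  rw [show r - 1 = r - 2 + 1 by omega,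
    filter_mem_powersetCard_succ_insert one_notMem_Sset] at hstar
  have hexchange := hstar.exchange hS₀
  rwa [erase_image_insert_powersetCard one_notMem_Sset S0set_subset_Sset, insert_sdiff_insert,
    sdiff_insert_of_notMem one_notMem_Sset, show r - 2 + 1 = r - 1 by omega] at hexchange

theorem Fam1_union_Fam3 (hr : 1 ≤ r) : Fam1 r ∪ Fam3 r = powersetCard r (insert 1 (Sset r)) := by
  obtain ⟨k, rfl⟩ := Nat.exists_eq_add_of_le' hr
  rw [powersetCard_succ_insert one_notMem_Sset, union_comm]
  rfl

theorem Fam2_union_Fam4 :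
    Fam2 n r ∪ Fam4 n r = image₂ insert (Icc (2 * r - 1) n) (exchangedStar r) := by
  rw [exchangedStar, image₂_insert_right, image₂_image_right, union_comm]
  simp only [Fam2, Fam4, image₂, Function.uncurry_def, insert_comm 1]

theorem famConstr_eq_transversalFamily (hr : 1 ≤ r) :
    FamConstr n r =
      transversalFamily (insert 1 (Sset r)) (Icc (2 * r - 1) n) (r - 1) (exchangedStar r) := by
  rw [transversalFamily, Nat.sub_add_cancel hr, ← Fam1_union_Fam3 hr, ← Fam2_union_Fam4, FamConstr]
  ac_rfl

end Construction

theorem famConstr_isMaxIntersecting_general (n r : ℕ) (hr : 2 ≤ r) (hn : 2 * r ≤ n) :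
    IsFamily n r (FamConstr n r) ∧ IsMaxIntersecting n r (FamConstr n r) := by
  have h𝓗 := isComplTransversal_exchangedStar hr
  have hdisj := disjoint_insert_one_Sset_Icc (n := n) hr
  have hground := insert_one_Sset_union_Icc hr (show 2 * r - 2 ≤ n by omega)
  have hr_succ : r - 1 + 1 = r := by omega
  have hX : 1 < #(Icc (2 * r - 1) n) := by rw [Nat.card_Icc]; omega
  rw [famConstr_eq_transversalFamily (by omega)]
  refine ⟨fun A hA ↦ ?_, fun A hA B hB ↦ ?_, fun G hGsub hGcard hG ↦ ?_⟩
  · have hA := ((mem_transversalFamily hdisj h𝓗.subset_powersetCard).1 hA).1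
    rwa [hground, hr_succ] at hA
  · exact not_disjoint_iff_nonempty_inter.1 (h𝓗.intersecting_transversalFamily hdisj hA hB)
  · rw [← hground] at hGsub
    simp only [← disjoint_iff_inter_eq_empty]
    exact h𝓗.exists_disjoint_of_notMem_transversalFamily hdisj hX hGsub
      (hGcard.trans hr_succ.symm) hG

/-- For `r ≥ 3` and `2r + 2 < n`, the family `F = F₁ ∪ F₂ ∪ F₃ ∪ F₄` is a
maximal intersecting family of `r`-element subsets of `[n]`. -/
theorem famConstr_isMaxIntersecting (n r : ℕ) (hr : 3 ≤ r) (hn : 2 * r + 2 < n) :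
    IsFamily n r (FamConstr n r) ∧ IsMaxIntersecting n r (FamConstr n r) :=
  famConstr_isMaxIntersecting_general n r (by omega) (by omega)
end

section
/- There exists a positive integer r₀ such that for all integers n, r with r₀ ≤ r and r² ≤ n, there is a maximal intersecting family F of r-element subsets of [n] with ∪F = [n] satisfying 4 · r² · Δ(F) ≤ 25 · n · δ(F); that is, Δ(F)/δ(F) ≤ (25/4) · n/r². In particular, for r ≤ n^{1/2} the minimum possible value of Δ(F)/δ(F) over maximal intersecting families covering [n] is Θ(n/r²). -/
/- Compose a projective plane of prime order `q`, where `q` is about `r / 54`, with a fixed plane of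
order `17`: a kernel consists of a line of the large plane together with a line of the small plane
in every fibre over it. Any two kernels meet, so the `r`-sets containing a kernel form an
intersecting family, which extends to a maximal one, `F`. Every other member of `F` meets all the
kernels and contains none of them. By Blokhuis's theorem, a set of points of the plane over `𝔽_p`,
`p` an odd prime, that blocks all lines and contains none of them has at least `3 (p + 1) / 2`
points; applied in both planes, this makes such transversals negligible. Hence the degrees in `F`
are governed by the kernels, which are evenly distributed: if there are `N` of them, of size `k`,
every point lies in about `N * choose (n - k - 1) (r - k - 1)` members of `F` that contain a kernel
avoiding it, and the members containing a kernel through it account for the factor `n / r ^ 2`. -/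

section Redei

open Finset Polynomial

theorem natDegree_coeff_prod_X_add_C_le {ι R : Type*} [CommSemiring R] {s : Finset ι}
    {ℓ : ι → R[X]} (hℓ : ∀ i ∈ s, (ℓ i).natDegree ≤ 1) {j : ℕ} (hj : j ≤ #s) :
    ((∏ i ∈ s, (X + C (ℓ i))).coeff j).natDegree ≤ #s - j := by
  rw [Finset.prod_X_add_C_coeff s ℓ hj]
  refine natDegree_sum_le_of_forall_le _ _ fun t ht => ?_
  obtain ⟨hts, htc⟩ := mem_powersetCard.1 ht
  calc (∏ i ∈ t, ℓ i).natDegree ≤ ∑ i ∈ t, (ℓ i).natDegree := natDegree_prod_le t ℓ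
    _ ≤ #s - j := by simpa [htc] using sum_le_card_nsmul t _ 1 fun i hi => hℓ i (hts hi)

theorem coeff_coeff_prod_X_add_C {ι R : Type*} [CommSemiring R] {s : Finset ι}
    {ℓ : ι → R[X]} (hℓ : ∀ i ∈ s, (ℓ i).natDegree ≤ 1) {j : ℕ} (hj : j ≤ #s) :
    ((∏ i ∈ s, (X + C (ℓ i))).coeff j).coeff (#s - j) =
      (∏ i ∈ s, (X + C ((ℓ i).coeff 1))).coeff j := by
  rw [Finset.prod_X_add_C_coeff s ℓ hj, Finset.prod_X_add_C_coeff s _ hj, finsetSum_coeff]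
  refine sum_congr rfl fun t ht => ?_
  obtain ⟨hts, htc⟩ := mem_powersetCard.1 ht
  simpa [htc] using coeff_prod_of_natDegree_le t ℓ 1 fun i hi => hℓ i (hts hi)

variable {K : Type*} [Field K] [Fintype K]

theorem X_pow_card_sub_X_dvd_prod_X_sub_C {ι : Type*} {s : Finset ι} {v : ι → K}
    (hv : ∀ t, ∃ i ∈ s, v i = t) :
    (X ^ Fintype.card K - X : K[X]) ∣ ∏ i ∈ s, (X - C (v i)) := by
  classical
  have hroots := FiniteField.roots_X_pow_card_sub_X K
  have hmonic : (X ^ Fintype.card K - X : K[X]).Monic :=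
    monic_X_pow_sub (by simpa using Fintype.one_lt_card)
  rw [← prod_multiset_X_sub_C_of_monic_of_roots_card_eq hmonic
    (by rw [hroots, FiniteField.X_pow_card_sub_X_natDegree_eq K Fintype.one_lt_card]; rfl), hroots,
    Multiset.prod_X_sub_C_dvd_iff_le_roots (monic_prod_X_sub_C v s).ne_zero,
    Multiset.le_iff_subset univ.nodup]
  intro t _
  obtain ⟨i, hi, rfl⟩ := hv t
  exact (mem_roots (monic_prod_X_sub_C v s).ne_zero).2 (by
    simpa [IsRoot.def, eval_prod, prod_eq_zero_iff] using ⟨i, hi, sub_self _⟩)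

theorem coeff_prod_X_sub_C_of_surjOn {ι : Type*} {s : Finset ι} {v : ι → K}
    (hv : ∀ t, ∃ i ∈ s, v i = t) {j : ℕ} (hcard : #s < Fintype.card K + j)
    (hj : j < Fintype.card K) :
    (∏ i ∈ s, (X - C (v i))).coeff j = if #s + 1 = Fintype.card K + j then -1 else 0 := by
  obtain ⟨G, hG⟩ := X_pow_card_sub_X_dvd_prod_X_sub_C hv
  have hq : (X ^ Fintype.card K - X : K[X]).Monic :=
    monic_X_pow_sub (by simpa using Fintype.one_lt_card)
  have hGm : G.Monic := hq.of_mul_monic_left (hG ▸ monic_prod_X_sub_C v s)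
  have hdeg : Fintype.card K + G.natDegree = #s := by
    rw [← natDegree_finsetProd_X_sub_C_eq_card s v, hG, hq.natDegree_mul hGm,
      FiniteField.X_pow_card_sub_X_natDegree_eq K Fintype.one_lt_card]
  obtain ⟨i, rfl⟩ : ∃ i, j = i + 1 := ⟨j - 1, by omega⟩
  rw [hG, sub_mul, coeff_sub, coeff_X_pow_mul', if_neg hj.not_ge, coeff_X_mul, zero_sub]
  split_ifs with h
  · rw [show i = G.natDegree by omega, hGm.coeff_natDegree]
  · rw [coeff_eq_zero_of_natDegree_lt (by omega), neg_zero]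

/- The coefficient of `Y ^ j` in the Rédei polynomial `∏ (Y - (a X + b))` has degree less than `q`
and takes the same value at every `X = u`, so it is constant. -/
theorem coeff_prod_X_sub_C_fst_eq_zero {S : Finset (K × K)}
    (hS : ∀ u t, ∃ z ∈ S, z.1 * u + z.2 = t) {j : ℕ} (hcard : #S < Fintype.card K + j)
    (hj : j < Fintype.card K) :
    (∏ z ∈ S, (X - C z.1)).coeff j = 0 := by
  have hqS : Fintype.card K ≤ #S := by
    classical
    calc Fintype.card K ≤ #(S.image Prod.snd) := by
          rw [← card_univ]
          refine card_le_card fun t _ => ?_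
          obtain ⟨z, hz, rfl⟩ := hS 0 t
          exact mem_image.2 ⟨z, hz, by simp⟩
      _ ≤ #S := card_image_le
  set ℓ : K × K → K[X] := fun z => -(C z.1 * X + C z.2)
  have hℓ : ∀ z ∈ S, (ℓ z).natDegree ≤ 1 := fun z _ => by
    simpa only [ℓ, natDegree_neg] using natDegree_linear_le
  set c : K[X] := (∏ z ∈ S, (X + C (ℓ z))).coeff j
  have heval (u : K) : c.eval u = if #S + 1 = Fintype.card K + j then -1 else 0 := by
    rw [← coeff_prod_X_sub_C_of_surjOn (hS u) hcard hj, ← coe_evalRingHom, ← coeff_map,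
      Polynomial.map_prod]
    simp [ℓ, sub_eq_add_neg]
  have hconst : c = C (if #S + 1 = Fintype.card K + j then -1 else 0) := by
    refine eq_of_natDegree_lt_card_of_eval_eq c _ Function.injective_id (by simpa using heval) ?_
    rw [natDegree_C, max_eq_left (Nat.zero_le _)]
    exact (natDegree_coeff_prod_X_add_C_le hℓ (by omega)).trans_lt (by omega)
  have htop := coeff_coeff_prod_X_add_C hℓ (j := j) (by omega)
  change c.coeff _ = _ at htop
  rw [hconst, coeff_C_of_ne_zero (by omega)] at htop
  simpa [ℓ, sub_eq_add_neg, coeff_X, coeff_C] using htop.symm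

end Redei

section Wronskian

open Finset Polynomial

theorem natCast_natDegree_eq_of_wronskian_eq_zero {R : Type*} [CommRing R] [IsDomain R]
    {a b : R[X]} (ha : a ≠ 0) (hb : b ≠ 0) (hw : wronskian a b = 0) :
    (a.natDegree : R) = b.natDegree := by
  have hXder (g : R[X]) : (derivative g * X).natDegree ≤ g.natDegree ∧
      (derivative g * X).coeff g.natDegree = g.leadingCoeff * g.natDegree := by
    cases hg : g.natDegree with
    | zero => simp [derivative_of_natDegree_zero hg]
    | succ d =>
      refine ⟨natDegree_mul_le.trans ?_, by simp [coeff_derivative, leadingCoeff, hg]⟩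
      have := natDegree_derivative_le g
      rw [natDegree_X]
      omega
  have htop (f g : R[X]) : (f * (derivative g * X)).coeff (f.natDegree + g.natDegree) =
      f.leadingCoeff * (g.leadingCoeff * g.natDegree) := by
    rw [coeff_mul_add_eq_of_natDegree_le le_rfl (hXder g).1, (hXder g).2, coeff_natDegree]
  have hcross : a * (derivative b * X) = b * (derivative a * X) := by
    linear_combination X * sub_eq_zero.1 hw
  have hcoeff := htop a b
  rw [hcross, add_comm, htop, mul_left_comm] at hcoeff
  exact mul_left_cancel₀ (leadingCoeff_ne_zero.2 hb)
    (mul_left_cancel₀ (leadingCoeff_ne_zero.2 ha) hcoeff)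

theorem exists_eq_C_mul_of_wronskian_eq_zero {K : Type*} [Field K] {p : ℕ} [CharP K p]
    {g h : K[X]} (hw : wronskian g h = 0) (hdeg : h.natDegree ≤ g.natDegree)
    (hg : g.natDegree < p) (hg0 : g ≠ 0) : ∃ c, h = C c * g := by
  by_contra! hne
  set c := h.coeff g.natDegree / g.leadingCoeff
  have hsub : h - C c * g ≠ 0 := sub_ne_zero.2 (hne c)
  have hle : (h - C c * g).natDegree ≤ g.natDegree :=
    (natDegree_sub_le_of_le hdeg (natDegree_C_mul_le c g)).trans_eq (max_self _)
  have hw' : wronskian g (h - C c * g) = 0 := by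
    rw [← wronskianBilin_apply, map_sub, ← smul_eq_C_mul, map_smul, wronskianBilin_apply, hw,
      wronskianBilin_apply, wronskian_self_eq_zero, smul_zero, sub_zero]
  have heq : g.natDegree = (h - C c * g).natDegree :=
    CharP.natCast_injOn_Iio K p hg (hle.trans_lt hg)
      (natCast_natDegree_eq_of_wronskian_eq_zero hg0 hsub hw')
  refine leadingCoeff_ne_zero.2 hsub ?_
  rw [leadingCoeff, ← heq, coeff_sub, coeff_C_mul, ← leadingCoeff,
    div_mul_cancel₀ _ (leadingCoeff_ne_zero.2 hg0), sub_self]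

theorem prod_X_sub_C_dvd_mul_derivative {ι R : Type*} [CommRing R] {s : Finset ι} {r : ι → R}
    {a : R[X]} (ha : ∀ i ∈ s, a.IsRoot (r i)) :
    ∏ i ∈ s, (X - C (r i)) ∣ a * derivative (∏ i ∈ s, (X - C (r i))) := by
  classical
  rw [derivative_prod_finset, mul_sum]
  refine dvd_sum fun i hi => ?_
  rw [derivative_X_sub_C, mul_one, ← mul_prod_erase s _ hi]
  exact mul_dvd_mul (dvd_iff_isRoot.2 (ha i hi)) dvd_rfl

/- Put `f = ∏ (X - r i)` and `w = g * h' - g' * h`. Each `r i` is a root of `X ^ p - X`, hence of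
`X * g + h`, so `f` divides `(X * g + h) * f' = (X * g + h) * (X ^ p * g' + h')`. Eliminating
`X ^ p` through `f` turns this into `f ∣ (X * g + h) * w`, whose degree is too small unless it
vanishes. -/
theorem X_mul_add_eq_zero_or_exists_eq_C_mul {p : ℕ} [Fact p.Prime] {ι : Type*} {s : Finset ι}
    {r : ι → ZMod p} {g h : (ZMod p)[X]} (hf : ∏ i ∈ s, (X - C (r i)) = X ^ p * g + h)
    (hg : g ≠ 0) (hgp : 2 * g.natDegree < p) (hh : h.natDegree ≤ g.natDegree) :
    X * g + h = 0 ∨ ∃ c, h = C c * g := by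
  set f := ∏ i ∈ s, (X - C (r i))
  have hroot : ∀ i ∈ s, (X * g + h).IsRoot (r i) := fun i hi => by
    have h0 : f.eval (r i) = 0 := by
      rw [eval_prod]
      exact prod_eq_zero hi (by simp)
    simpa [hf, ZMod.pow_card] using h0
  have hdvd : f ∣ (X * g + h) * wronskian g h := by
    have hder : derivative f = X ^ p * derivative g + derivative h := by
      simp [hf, derivative_X_pow]
    have := (prod_X_sub_C_dvd_mul_derivative hroot).mul_left g
    rw [show g * ((X * g + h) * derivative f) = (X * g + h) * wronskian g h +
      f * ((X * g + h) * derivative g) by rw [hder, hf, wronskian]; ring] at this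
    exact (dvd_add_left (dvd_mul_right f _)).1 this
  have hfdeg : f.natDegree = p + g.natDegree := by
    rw [hf, natDegree_add_eq_left_of_natDegree_lt, natDegree_X_pow_mul _ hg, add_comm]
    rw [natDegree_X_pow_mul _ hg]
    omega
  rw [or_iff_not_imp_left]
  intro hne
  refine exists_eq_C_mul_of_wronskian_eq_zero (p := p) ?_ hh (by omega) hg
  by_contra hw
  have hle := natDegree_le_of_dvd hdvd (mul_ne_zero hne hw)
  rw [natDegree_mul hne hw, hfdeg] at hle
  have hlin : (X * g + h).natDegree ≤ g.natDegree + 1 :=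
    natDegree_add_le_of_degree_le (by rw [natDegree_X_mul hg]) (by omega)
  have := natDegree_wronskian_lt_add hw
  omega

end Wronskian

section Affine

open Finset Polynomial

/- Jamison's bound: `∏ (1 + a ⬝ᵥ x)` vanishes at every `x ≠ 0`, so its values sum to its value `1`
at `x = 0`, while the values of a polynomial of low degree sum to `0`. -/
theorem card_sub_one_mul_card_le_of_forall_ne_zero {K σ : Type*} [Field K] [Fintype K] [Fintype σ]
    {A : Finset (σ → K)} (hA : ∀ x ≠ 0, ∃ a ∈ A, 1 + a ⬝ᵥ x = 0) :
    (Fintype.card K - 1) * Fintype.card σ ≤ #A := by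
  classical
  by_contra! hlt
  set P : MvPolynomial σ K := ∏ a ∈ A, (1 + ∑ i, MvPolynomial.C (a i) * MvPolynomial.X i)
  have hdeg : P.totalDegree ≤ #A := by
    refine (MvPolynomial.totalDegree_finsetProd _ _).trans
      ((sum_le_card_nsmul A _ 1 fun a _ => ?_).trans_eq (by simp))
    refine (MvPolynomial.totalDegree_add _ _).trans (max_le (by simp) ?_)
    exact MvPolynomial.totalDegree_finsetSum_le fun i _ =>
      (MvPolynomial.totalDegree_mul _ _).trans (by simp)
  have heval (x : σ → K) : MvPolynomial.eval x P = ∏ a ∈ A, (1 + a ⬝ᵥ x) := by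
    simp [P, dotProduct]
  have hsum := MvPolynomial.sum_eval_eq_zero P (hdeg.trans_lt hlt)
  rw [Fintype.sum_eq_single 0 fun x hx => ?_, heval] at hsum
  · simp at hsum
  · obtain ⟨a, ha, hax⟩ := hA x hx
    rw [heval, prod_eq_zero ha hax]

theorem two_mul_card_le_card_add_one {K : Type*} [Field K] [Fintype K] {S : Finset (K × K)}
    (hS : ∀ u t, ∃ z ∈ S, z.1 * u + z.2 = t) (hvert : ∀ c, ∃ b, (c, b) ∈ S) :
    2 * Fintype.card K ≤ #S + 1 := by
  classical
  obtain ⟨z₀, hz₀, -⟩ := hS 0 0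
  have hcard : (Fintype.card K - 1) * Fintype.card (Fin 2) ≤
      #((S.erase z₀).image fun z => ![z.1 - z₀.1, z.2 - z₀.2]) := by
    refine card_sub_one_mul_card_le_of_forall_ne_zero fun x hx => ?_
    suffices ∃ z ∈ S, 1 + ((z.1 - z₀.1) * x 0 + (z.2 - z₀.2) * x 1) = 0 by
      obtain ⟨z, hz, hline⟩ := this
      refine ⟨_, mem_image_of_mem _ (mem_erase.2 ⟨?_, hz⟩), by simpa [dotProduct] using hline⟩
      rintro rfl
      simp at hline
    by_cases hx1 : x 1 = 0
    · have hx0 : x 0 ≠ 0 := fun hx0 => hx (by ext i; fin_cases i <;> assumption)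
      obtain ⟨b, hb⟩ := hvert (z₀.1 - 1 / x 0)
      exact ⟨_, hb, by simp [hx1, hx0]⟩
    · obtain ⟨z, hz, hline⟩ := hS (x 0 / x 1) (z₀.2 + z₀.1 * (x 0 / x 1) - 1 / x 1)
      refine ⟨z, hz, ?_⟩
      field_simp at hline
      linear_combination hline
  have := hcard.trans card_image_le
  rw [card_erase_of_mem hz₀, Fintype.card_fin] at this
  have := card_pos.2 ⟨z₀, hz₀⟩
  have := Fintype.card_pos (α := K)
  omega

theorem le_card_filter_of_X_sub_C_pow_dvd {ι R : Type*} [CommRing R] [IsDomain R] [DecidableEq R]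
    {s : Finset ι} {v : ι → R} {a : R} {m : ℕ}
    (h : (X - C a) ^ m ∣ ∏ i ∈ s, (X - C (v i))) : m ≤ #{i ∈ s | v i = a} := by
  have hroots : (∏ i ∈ s, (X - C (v i))).roots = s.val.map v := by
    simpa using roots_multiset_prod_X_sub_C (s.val.map v)
  have := (le_rootMultiplicity_iff (monic_prod_X_sub_C v s).ne_zero).2 h
  rw [← count_roots, hroots, Multiset.count_map] at this
  simpa [eq_comm, card_def] using this

theorem mem_of_X_sub_C_pow_card_dvd {K : Type*} [Field K] [Fintype K] {S : Finset (K × K)} {c : K}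
    (h : (X - C c) ^ Fintype.card K ∣ ∏ z ∈ S, (X - C z.1)) (b : K) : (c, b) ∈ S := by
  classical
  have hinj : Set.InjOn (Prod.snd : K × K → K) ({z ∈ S | z.1 = c} : Finset (K × K)) := by
    intro z hz w hw hzw
    simp only [coe_filter, Set.mem_ofPred_eq] at hz hw
    exact Prod.ext (hz.2.trans hw.2.symm) hzw
  have huniv : {z ∈ S | z.1 = c}.image Prod.snd = univ := by
    rw [← card_eq_iff_eq_univ]
    refine le_antisymm (card_le_univ _) ?_
    rw [card_image_of_injOn hinj]
    exact le_card_filter_of_X_sub_C_pow_dvd h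
  obtain ⟨z, hz, rfl⟩ := mem_image.1 (huniv ▸ mem_univ b)
  obtain ⟨hzS, rfl⟩ := mem_filter.1 hz
  exact hzS

theorem exists_X_pow_mul_add {R : Type*} [CommRing R] [Nontrivial R] {f : R[X]} {m k : ℕ}
    (hcoeff : ∀ j, k < j → j < m → f.coeff j = 0) (hdeg : f.natDegree = m + k) :
    ∃ g h, f = X ^ m * g + h ∧ g.natDegree = k ∧ h.natDegree ≤ k := by
  refine ⟨f /ₘ X ^ m, f %ₘ X ^ m, by rw [add_comm, modByMonic_add_div], ?_, ?_⟩
  · rw [natDegree_divByMonic f (monic_X_pow m), hdeg, natDegree_X_pow, Nat.add_sub_cancel_left]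
  · refine natDegree_le_iff_coeff_eq_zero.2 fun j hj => ?_
    rcases lt_or_ge j m with hjm | hjm
    · rw [← hcoeff j hj hjm]
      conv_rhs => rw [← modByMonic_add_div f (X ^ m)]
      rw [coeff_add, coeff_X_pow_mul', if_neg hjm.not_ge, add_zero]
    · refine coeff_eq_zero_of_degree_lt ((degree_modByMonic_lt f (monic_X_pow m)).trans_le ?_)
      rw [degree_X_pow]
      exact_mod_cast hjm

theorem exists_forall_mem_of_two_mul_card_lt {p : ℕ} [Fact p.Prime] {S : Finset (ZMod p × ZMod p)}
    (hS : ∀ u t, ∃ z ∈ S, z.1 * u + z.2 = t) (hcard : 2 * #S < 3 * p) :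
    ∃ c, ∀ b, (c, b) ∈ S := by
  have hp := Fact.out (p := p.Prime)
  have hpS : p ≤ #S := by
    have := card_le_card_of_surjOn (s := S) (t := (univ : Finset (ZMod p))) Prod.snd fun t _ => by
      simpa using hS 0 t
    simpa [ZMod.card] using this
  obtain ⟨k, hk⟩ := Nat.exists_eq_add_of_le hpS
  set f : (ZMod p)[X] := ∏ z ∈ S, (X - C z.1)
  obtain ⟨g, h, hf, hg, hh⟩ : ∃ g h, f = X ^ p * g + h ∧ g.natDegree = k ∧ h.natDegree ≤ k := by
    refine exists_X_pow_mul_add (fun j hkj hjp => ?_)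
      (by rw [natDegree_finsetProd_X_sub_C_eq_card, hk])
    exact coeff_prod_X_sub_C_fst_eq_zero hS (by rw [ZMod.card]; omega) (by rwa [ZMod.card])
  have hg0 : g ≠ 0 := by
    rintro rfl
    have hfdeg : f.natDegree = #S := natDegree_finsetProd_X_sub_C_eq_card S Prod.fst
    rw [hf, mul_zero, zero_add] at hfdeg
    have := hp.pos
    omega
  rcases X_mul_add_eq_zero_or_exists_eq_C_mul hf hg0 (by omega) (by omega) with hzero | ⟨c, rfl⟩
  · have hvert (c : ZMod p) : ∃ b, (c, b) ∈ S := by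
      have hroot : f.eval c = 0 := by
        simpa [hf, ZMod.pow_card] using congrArg (eval c) hzero
      obtain ⟨z, hz, hcz⟩ := prod_eq_zero_iff.1 ((eval_prod S _ c).symm.trans hroot)
      rw [eval_sub, eval_X, eval_C, sub_eq_zero] at hcz
      exact ⟨z.2, hcz ▸ hz⟩
    have := two_mul_card_le_card_add_one hS hvert
    rw [ZMod.card] at this
    have := hp.two_le
    omega
  · refine ⟨-c, mem_of_X_sub_C_pow_card_dvd ⟨g, ?_⟩⟩
    change f = _
    rw [hf, ZMod.card, C_neg, sub_neg_eq_add, add_pow_char, ← C_pow, ZMod.pow_card]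
    ring

end Affine

section Projective

open Finset Projectivization Configuration Matrix
open scoped LinearAlgebra.Projectivization

theorem exists_subset_forall_exists_and_tangent {α β : Type*} [Nonempty β]
    {R : α → β → Prop} {B : Finset α} (hB : ∀ w, ∃ v ∈ B, R v w) :
    ∃ B₀ ⊆ B, (∀ w, ∃ v ∈ B₀, R v w) ∧ ∃ v₀ ∈ B₀, ∃ w₀, ∀ v ∈ B₀, R v w₀ ↔ v = v₀ := by
  classical
  obtain ⟨B₀, hB₀B, hmin⟩ := exists_minimal_le_of_wellFoundedLT
    (fun B : Finset α => ∀ w, ∃ v ∈ B, R v w) B hB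
  obtain ⟨v₀, hv₀, -⟩ := hmin.prop (Classical.arbitrary β)
  obtain ⟨w₀, hw₀⟩ : ∃ w₀, ∀ v ∈ B₀.erase v₀, ¬R v w₀ := by
    by_contra! hblock
    exact notMem_erase v₀ B₀ (hmin.le_of_le hblock (erase_subset _ _) hv₀)
  have honly (v) (hv : v ∈ B₀) (hvw : R v w₀) : v = v₀ := by
    by_contra hne
    exact hw₀ v (mem_erase.2 ⟨hne, hv⟩) hvw
  obtain ⟨v, hv, hvw⟩ := hmin.prop w₀
  exact ⟨B₀, hB₀B, hmin.prop, v₀, hv₀, w₀,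
    fun u hu => ⟨honly u hu, fun huv => huv ▸ honly v hv hvw ▸ hvw⟩⟩

theorem eq_of_forall_rep_dotProduct_eq {K σ : Type*} [Field K] [Fintype σ]
    {w : σ → σ → K} (hw : LinearIndependent K w) {v v' : ℙ K (σ → K)} (c : K)
    (h : ∀ i, v.rep ⬝ᵥ w i = c * (v'.rep ⬝ᵥ w i)) : v = v' := by
  classical
  have hinj : Function.Injective (Matrix.of w).mulVec :=
    mulVec_injective_iff_isUnit.2 (linearIndependent_rows_iff_isUnit.1 hw)
  have hrep : c • v'.rep = v.rep := hinj <| by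
    ext i
    simp [mulVec, dotProduct_comm _ v'.rep, dotProduct_comm _ v.rep, h i]
  rw [← v.mk_rep, ← v'.mk_rep]
  exact (mk_eq_mk_iff' K _ _ v.rep_nonzero v'.rep_nonzero).2 ⟨c, hrep⟩

variable {K : Type*} [Field K]

theorem orthogonal_iff_rep {σ : Type*} [Fintype σ] {v w : ℙ K (σ → K)} :
    v.orthogonal w ↔ v.rep ⬝ᵥ w.rep = 0 := by
  rw [← orthogonal_mk v.rep_nonzero w.rep_nonzero, mk_rep, mk_rep]

theorem orthogonal_mk_right {σ : Type*} [Fintype σ] {v : ℙ K (σ → K)} {w : σ → K} (hw : w ≠ 0) :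
    v.orthogonal (mk K w hw) ↔ v.rep ⬝ᵥ w = 0 := by
  rw [← orthogonal_mk v.rep_nonzero hw, mk_rep]

theorem exists_ne_orthogonal [Finite K] (v w : ℙ K (Fin 3 → K)) :
    ∃ w', v.orthogonal w' ∧ w' ≠ w := by
  classical
  have hcount := ProjectivePlane.two_lt_lineCount (L := ℙ K (Fin 3 → K)) v
  rw [lineCount] at hcount
  by_contra! hw
  have : Subsingleton {l : ℙ K (Fin 3 → K) // v ∈ l} :=
    ⟨fun a b => Subtype.ext ((hw _ a.2).trans (hw _ b.2).symm)⟩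
  have := Finite.card_le_one_iff_subsingleton.2 this
  omega

theorem exists_linearIndependent_of_orthogonal [Finite K] {v w : ℙ K (Fin 3 → K)}
    (hvw : v.orthogonal w) : ∃ w₁ w₂ : Fin 3 → K, v.rep ⬝ᵥ w₁ = 0 ∧ v.rep ⬝ᵥ w₂ ≠ 0 ∧
      LinearIndependent K ![w.rep, w₁, w₂] := by
  classical
  obtain ⟨w₁, hvw₁, hne⟩ := exists_ne_orthogonal v w
  obtain ⟨w₂, hvw₂⟩ := exists_not_self_orthogonal v
  rw [orthogonal_iff_rep] at hvw hvw₁ hvw₂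
  have hrep : Projectivization.rep ∘ ![w, w₁] = ![w.rep, w₁.rep] := by
    ext i : 1
    fin_cases i <;> rfl
  have hpair : LinearIndependent K ![w.rep, w₁.rep] :=
    hrep ▸ independent_iff.1 ((independent_pair_iff_ne w w₁).2 hne.symm)
  refine ⟨w₁.rep, w₂.rep, hvw₁, hvw₂, Fintype.linearIndependent_iff.2 fun c hc => ?_⟩
  simp only [Fin.sum_univ_three, Matrix.cons_val] at hc
  have hc₂ : c 2 = 0 := by
    have := congrArg (v.rep ⬝ᵥ ·) hc
    simpa [dotProduct_add, hvw, hvw₁, hvw₂] using this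
  rw [hc₂, zero_smul, add_zero] at hc
  obtain ⟨hc₀, hc₁⟩ := LinearIndependent.pair_iff.1 hpair _ _ hc
  intro i
  fin_cases i <;> assumption

/-- The affine coordinates of a projective point with respect to the linear forms `w 0`, `w 1`,
`w 2`, the line `w 0` being at infinity (where the division by zero returns a meaningless value). -/
noncomputable def affineChart (w : Fin 3 → Fin 3 → K) (v : ℙ K (Fin 3 → K)) : K × K :=
  ((v.rep ⬝ᵥ w 1) / (v.rep ⬝ᵥ w 0), (v.rep ⬝ᵥ w 2) / (v.rep ⬝ᵥ w 0))

theorem exists_mem_image_affineChart [DecidableEq K] [DecidableEq (ℙ K (Fin 3 → K))]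
    {w : Fin 3 → Fin 3 → K}
    {B : Finset (ℙ K (Fin 3 → K))} (hB : ∀ l, ∃ v ∈ B, v.orthogonal l) {v₀ : ℙ K (Fin 3 → K)}
    (h0 : v₀.rep ⬝ᵥ w 0 = 0) (h1 : v₀.rep ⬝ᵥ w 1 = 0) (h2 : v₀.rep ⬝ᵥ w 2 ≠ 0)
    (htan : ∀ v ∈ B, v.rep ⬝ᵥ w 0 = 0 → v = v₀) (u t : K) :
    ∃ z ∈ (B.erase v₀).image (affineChart w), z.1 * u + z.2 = t := by
  have hdot (v : ℙ K (Fin 3 → K)) : v.rep ⬝ᵥ (u • w 1 + w 2 - t • w 0) =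
      u * (v.rep ⬝ᵥ w 1) + v.rep ⬝ᵥ w 2 - t * (v.rep ⬝ᵥ w 0) := by
    simp [dotProduct_add, dotProduct_sub]
  have hdot₀ : v₀.rep ⬝ᵥ (u • w 1 + w 2 - t • w 0) ≠ 0 := by simpa [hdot, h0, h1] using h2
  obtain ⟨v, hv, hvl⟩ := hB (mk K (u • w 1 + w 2 - t • w 0)
    fun h => hdot₀ (by rw [h, dotProduct_zero]))
  rw [orthogonal_mk_right, hdot] at hvl
  have hne : v ≠ v₀ := by
    rintro rfl
    exact hdot₀ (hdot v ▸ hvl)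
  have hv0 : v.rep ⬝ᵥ w 0 ≠ 0 := fun h => hne (htan v hv h)
  refine ⟨_, mem_image_of_mem _ (mem_erase.2 ⟨hne, hv⟩), ?_⟩
  simp only [affineChart]
  field_simp
  linear_combination hvl

theorem mem_of_forall_mem_image_affineChart [DecidableEq K] [DecidableEq (ℙ K (Fin 3 → K))]
    {w : Fin 3 → Fin 3 → K} (hli : LinearIndependent K w) {B : Finset (ℙ K (Fin 3 → K))}
    {v₀ : ℙ K (Fin 3 → K)} (hv₀ : v₀ ∈ B) (h0 : v₀.rep ⬝ᵥ w 0 = 0) (h1 : v₀.rep ⬝ᵥ w 1 = 0)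
    (h2 : v₀.rep ⬝ᵥ w 2 ≠ 0) (htan : ∀ v ∈ B, v.rep ⬝ᵥ w 0 = 0 → v = v₀) {c : K}
    (hc : ∀ b, (c, b) ∈ (B.erase v₀).image (affineChart w)) {v : ℙ K (Fin 3 → K)}
    (hv : v.rep ⬝ᵥ w 1 = c * (v.rep ⬝ᵥ w 0)) : v ∈ B := by
  by_cases hd : v.rep ⬝ᵥ w 0 = 0
  · suffices v = v₀ from this ▸ hv₀
    exact eq_of_forall_rep_dotProduct_eq hli ((v.rep ⬝ᵥ w 2) / (v₀.rep ⬝ᵥ w 2)) fun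
      | 0 => by rw [hd, h0, mul_zero]
      | 1 => by rw [hv, hd, h1, mul_zero, mul_zero]
      | 2 => (div_mul_cancel₀ _ h2).symm
  · obtain ⟨v', hv', heq⟩ := mem_image.1 (hc ((v.rep ⬝ᵥ w 2) / (v.rep ⬝ᵥ w 0)))
    have hv'B := mem_of_mem_erase hv'
    suffices v = v' from this ▸ hv'B
    have hd' : v'.rep ⬝ᵥ w 0 ≠ 0 := fun h => ne_of_mem_erase hv' (htan v' hv'B h)
    obtain ⟨h1', h2'⟩ := Prod.ext_iff.1 heq
    simp only [affineChart] at h1' h2'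
    rw [div_eq_div_iff hd' hd] at h2'
    exact eq_of_forall_rep_dotProduct_eq hli ((v.rep ⬝ᵥ w 0) / (v'.rep ⬝ᵥ w 0)) fun
      | 0 => (div_mul_cancel₀ _ hd').symm
      | 1 => by rw [hv, ← h1']; field_simp
      | 2 => by field_simp; linear_combination -h2'

theorem three_mul_add_two_le_two_mul_card {p : ℕ} [Fact p.Prime]
    {B : Finset (ℙ (ZMod p) (Fin 3 → ZMod p))} (hB : ∀ l, ∃ v ∈ B, v.orthogonal l)
    (hline : ∀ l, ∃ v, v.orthogonal l ∧ v ∉ B) : 3 * p + 2 ≤ 2 * #B := by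
  classical
  by_contra! hlt
  obtain ⟨B₀, hB₀B, hB₀, v₀, hv₀, l₀, htan⟩ := exists_subset_forall_exists_and_tangent hB
  have hv₀l₀ := (htan v₀ hv₀).2 rfl
  obtain ⟨w₁, w₂, h1, h2, hli⟩ := exists_linearIndependent_of_orthogonal hv₀l₀
  rw [orthogonal_iff_rep] at hv₀l₀
  simp only [orthogonal_iff_rep] at htan
  set w := ![l₀.rep, w₁, w₂]
  have hcard : #((B₀.erase v₀).image (affineChart w)) + 1 ≤ #B := by
    have := card_le_card hB₀B
    have := card_erase_add_one hv₀
    have := card_image_le (s := B₀.erase v₀) (f := affineChart w)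
    omega
  obtain ⟨c, hc⟩ := exists_forall_mem_of_two_mul_card_lt (p := p)
    (exists_mem_image_affineChart hB₀ (w := w) hv₀l₀ h1 h2 fun v hv => (htan v hv).1) (by omega)
  have hlc : w 1 - c • w 0 ≠ 0 := fun h => one_ne_zero <|
    Fintype.linearIndependent_iff.1 hli ![-c, 1, 0]
      (by simp [Fin.sum_univ_three, neg_add_eq_sub, ← h, w]) 1
  obtain ⟨v, hv, hvB⟩ := hline (mk _ _ hlc)
  simp only [orthogonal_mk_right, dotProduct_sub, dotProduct_smul, smul_eq_mul, sub_eq_zero] at hv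
  have hvB₀ := mem_of_forall_mem_image_affineChart hli hv₀ hv₀l₀ h1 h2
    (fun v hv => (htan v hv).1) hc hv
  exact hvB (hB₀B hvB₀)

end Projective

/-- The family `L` is the set of lines of a projective plane of order `s` on the point set `P`. -/
structure IsPlane {P : Type*} [Fintype P] [DecidableEq P] (s : ℕ) (L : Finset (Finset P)) :
    Prop where
  card_points : Fintype.card P = s ^ 2 + s + 1
  card_lines : L.card = s ^ 2 + s + 1
  card_line : ∀ l ∈ L, l.card = s + 1
  card_lines_through : ∀ x, (L.filter fun l => x ∈ l).card = s + 1
  card_inter : ∀ l ∈ L, ∀ m ∈ L, l ≠ m → (l ∩ m).card = 1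

/-- `S` is a blocking set of the family `L`: it meets every member of `L`. -/
def Blocks {P : Type*} [DecidableEq P] (L : Finset (Finset P)) (S : Finset P) : Prop :=
  ∀ l ∈ L, (l ∩ S).Nonempty

/-- Every blocking set of `L` with fewer than `b` elements is trivial, i.e. contains a member
of `L`. -/
def BlockingBound {P : Type*} [DecidableEq P] (L : Finset (Finset P)) (b : ℕ) : Prop :=
  ∀ S, Blocks L S → (∃ l ∈ L, l ⊆ S) ∨ b ≤ S.card

section Planes

open Finset Configuration

open Classical in
/-- The set of points on the line `l` of a configuration. -/
noncomputable def pointSet (P : Type*) {L : Type*} [Membership P L] [Fintype P] (l : L) :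
    Finset P := {x | x ∈ l}

@[simp]
theorem mem_pointSet {P L : Type*} [Membership P L] [Fintype P] {x : P} {l : L} :
    x ∈ pointSet P l ↔ x ∈ l := by simp [pointSet]

section ProjectivePlane

variable {P L : Type*} [Membership P L] [ProjectivePlane P L] [Fintype P]

theorem card_pointSet [Finite L] (l : L) : #(pointSet P l) = ProjectivePlane.order P L + 1 := by
  classical
  rw [← ProjectivePlane.pointCount_eq P l, pointCount, Nat.card_eq_fintype_card,
    Fintype.card_subtype]
  congr

theorem card_pointSet_inter_pointSet [DecidableEq P] {l m : L} (h : l ≠ m) :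
    #(pointSet P l ∩ pointSet P m) = 1 := by
  obtain ⟨x, ⟨hxl, hxm⟩, huniq⟩ := HasPoints.existsUnique_point P L l m h
  refine card_eq_one.2 ⟨x, ?_⟩
  ext y
  rw [mem_inter, mem_pointSet, mem_pointSet, mem_singleton]
  exact ⟨huniq y, fun hy => hy ▸ ⟨hxl, hxm⟩⟩

theorem pointSet_injective [Finite L] : Function.Injective (pointSet P : L → Finset P) := by
  classical
  intro l m hlm
  by_contra hne
  have hcard := card_pointSet_inter_pointSet (P := P) hne
  rw [← hlm, inter_self, card_pointSet] at hcard
  have := ProjectivePlane.one_lt_order P L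
  omega

theorem isPlane_image_pointSet [Fintype L] [DecidableEq P] :
    IsPlane (ProjectivePlane.order P L) (univ.image (pointSet P : L → Finset P)) where
  card_points := ProjectivePlane.card_points P L
  card_lines := by
    rw [card_image_of_injective _ pointSet_injective, card_univ, ProjectivePlane.card_lines P L]
  card_line := forall_mem_image.2 fun l _ => card_pointSet l
  card_lines_through x := by
    classical
    rw [filter_image, card_image_of_injective _ pointSet_injective,
      ← ProjectivePlane.lineCount_eq (L := L) x, lineCount, Nat.card_eq_fintype_card,
      Fintype.card_subtype]
    simp only [mem_pointSet]
  card_inter := forall_mem_image.2 fun l _ => forall_mem_image.2 fun m _ hne =>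
    card_pointSet_inter_pointSet (ne_of_apply_ne _ hne)

end ProjectivePlane

open scoped LinearAlgebra.Projectivization

theorem order_projectivization {K : Type*} [Field K] [Fintype K] [DecidableEq K] :
    ProjectivePlane.order (ℙ K (Fin 3 → K)) (ℙ K (Fin 3 → K)) = Fintype.card K := by
  have := Fintype.ofFinite (ℙ K (Fin 3 → K))
  have hcard := ProjectivePlane.card_points (ℙ K (Fin 3 → K)) (ℙ K (Fin 3 → K))
  rw [Fintype.card_eq_nat_card, Projectivization.card_of_finrank K (Fin 3 → K) (n := 3) (by simp)]
    at hcard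
  simp only [sum_range_succ, sum_range_zero, Nat.card_eq_fintype_card] at hcard
  nlinarith

theorem exists_isPlane_blockingBound {p : ℕ} (hp : p.Prime) (hodd : Odd p) :
    ∃ (P : Type) (_ : Fintype P) (_ : DecidableEq P) (L : Finset (Finset P)),
      IsPlane p L ∧ BlockingBound L (3 * (p + 1) / 2) := by
  classical
  have : Fact p.Prime := ⟨hp⟩
  let P := ℙ (ZMod p) (Fin 3 → ZMod p)
  let _ : Fintype P := Fintype.ofFinite P
  refine ⟨P, inferInstance, inferInstance, univ.image (pointSet P : P → Finset P), ?_, ?_⟩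
  · have hplane := isPlane_image_pointSet (P := P) (L := P)
    rwa [order_projectivization, ZMod.card] at hplane
  · intro S hS
    rw [or_iff_not_imp_left]
    intro hno
    have hcard : 3 * p + 2 ≤ 2 * #S := by
      refine three_mul_add_two_le_two_mul_card (fun l => ?_) fun l => ?_
      · obtain ⟨v, hv⟩ := hS _ (mem_image_of_mem (pointSet P) (mem_univ l))
        rw [mem_inter, mem_pointSet] at hv
        exact ⟨v, hv.2, hv.1⟩
      · by_contra! hl
        exact hno ⟨_, mem_image_of_mem (pointSet P) (mem_univ l), fun v hv =>
          hl v (mem_pointSet.1 hv)⟩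
    obtain ⟨m, rfl⟩ := hodd
    omega

namespace IsPlane

variable {P : Type*} [Fintype P] [DecidableEq P] {s : ℕ} {L : Finset (Finset P)}

theorem inter_nonempty (hL : IsPlane s L) {l m : Finset P} (hl : l ∈ L) (hm : m ∈ L) :
    (l ∩ m).Nonempty := by
  rw [← card_pos]
  by_cases h : l = m
  · rw [h, inter_self, hL.card_line m hm]
    exact s.succ_pos
  · rw [hL.card_inter l hl m hm h]
    exact one_pos

theorem succ_le_card_of_blocks (hL : IsPlane s L) {S : Finset P} (hS : Blocks L S) :
    s + 1 ≤ #S := by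
  have hcount : #L * 1 ≤ #S * (s + 1) :=
    card_mul_le_card_mul (fun l x => x ∈ l)
      (fun l hl => by
        rw [one_le_card, bipartiteAbove, filter_mem_eq_inter, inter_comm]
        exact hS l hl)
      fun x _ => (hL.card_lines_through x).le
  rw [mul_one, hL.card_lines] at hcount
  by_contra! hlt
  nlinarith

end IsPlane

end Planes

section Composition

open Finset

variable {P Q : Type*} [Fintype P] [DecidableEq P]

/-- The set functions `ψ : P → Finset Q` choosing a member of `𝒟` at every point of `U`, and the
empty set elsewhere. A set function stands for the subset `{(x, y) | y ∈ ψ x}` of `P × Q`. -/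
def sections (U : Finset P) (𝒟 : Finset (Finset Q)) : Finset (P → Finset Q) :=
  Fintype.piFinset fun x => if x ∈ U then 𝒟 else {∅}

theorem mem_sections {U : Finset P} {𝒟 : Finset (Finset Q)} {ψ : P → Finset Q} :
    ψ ∈ sections U 𝒟 ↔ (∀ x ∈ U, ψ x ∈ 𝒟) ∧ ∀ x ∉ U, ψ x = ∅ := by
  rw [sections, Fintype.mem_piFinset, ← forall_and]
  refine forall_congr' fun x => ?_
  by_cases hx : x ∈ U <;> simp [hx]

theorem sections_subset_sections (U : Finset P) {𝒟 ℰ : Finset (Finset Q)} (h : 𝒟 ⊆ ℰ) :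
    sections U 𝒟 ⊆ sections U ℰ := fun _ hψ =>
  mem_sections.2 ⟨fun x hx => h ((mem_sections.1 hψ).1 x hx), (mem_sections.1 hψ).2⟩

theorem exists_mem_sections_le {U : Finset P} {𝒟 : Finset (Finset Q)} {a : P → Finset Q}
    (h : ∀ x ∈ U, ∃ Z ∈ 𝒟, Z ⊆ a x) : ∃ ψ ∈ sections U 𝒟, ψ ≤ a := by
  choose! f hf𝒟 hfa using h
  refine ⟨fun x => if x ∈ U then f x else ∅, mem_sections.2 ⟨fun x hx => ?_, fun x hx => if_neg hx⟩,
    fun x => ?_⟩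
  · simpa only [if_pos hx] using hf𝒟 x hx
  · dsimp only
    split_ifs with hx
    exacts [hfa x hx, empty_subset _]

theorem sum_prod_sections {R : Type*} [CommSemiring R] (U : Finset P) (𝒟 : Finset (Finset Q))
    (w : P → Finset Q → R) :
    ∑ ψ ∈ sections U 𝒟, ∏ x ∈ U, w x (ψ x) = ∏ x ∈ U, ∑ Z ∈ 𝒟, w x Z := by
  have hU : ∀ f : P → R, ∏ x ∈ U, f x = ∏ x, if x ∈ U then f x else 1 := fun f =>
    (prod_ite_mem_eq U f).symm
  simp only [hU]
  rw [sections, ← prod_univ_sum _ fun x Z => if x ∈ U then w x Z else 1]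
  refine prod_congr rfl fun x _ => ?_
  by_cases hx : x ∈ U <;> simp [hx]

theorem card_sections (U : Finset P) (𝒟 : Finset (Finset Q)) : #(sections U 𝒟) = #𝒟 ^ #U := by
  have hsum := sum_prod_sections U 𝒟 fun _ _ => 1
  simpa only [prod_const, one_pow, sum_const, smul_eq_mul, mul_one] using hsum

theorem card_filter_mem_sections [DecidableEq Q] {U : Finset P} {x : P} (hx : x ∈ U)
    (𝒟 : Finset (Finset Q)) (y : Q) :
    #{ψ ∈ sections U 𝒟 | y ∈ ψ x} = #{Z ∈ 𝒟 | y ∈ Z} * #𝒟 ^ (#U - 1) := by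
  have hsum := sum_prod_sections U 𝒟 fun x' Z => if x' = x then if y ∈ Z then 1 else 0 else 1
  simp only [prod_ite_eq', hx, if_true] at hsum
  rw [card_filter, hsum, ← mul_prod_erase U _ hx, card_filter,
    prod_congr rfl fun x' hx' => sum_congr rfl fun Z _ => if_neg (ne_of_mem_erase hx')]
  simp [card_erase_of_mem hx]

theorem sum_card_of_mem_sections {U : Finset P} {𝒟 : Finset (Finset Q)} {ψ : P → Finset Q}
    (hψ : ψ ∈ sections U 𝒟) : ∑ x, #(ψ x) = ∑ x ∈ U, #(ψ x) :=
  (sum_subset (subset_univ U) fun x _ hx => by rw [(mem_sections.1 hψ).2 x hx, card_empty]).symm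

theorem mem_iff_ne_empty_of_mem_sections {U : Finset P} {𝒟 : Finset (Finset Q)} (h𝒟 : ∅ ∉ 𝒟)
    {ψ : P → Finset Q} (hψ : ψ ∈ sections U 𝒟) {x : P} : x ∈ U ↔ ψ x ≠ ∅ :=
  ⟨fun hx h => h𝒟 (h ▸ (mem_sections.1 hψ).1 x hx), not_imp_comm.1 ((mem_sections.1 hψ).2 x)⟩

variable [DecidableEq Q]

/-- The set functions `ψ : P → Finset Q` supported on a member of `𝒰`, with a member of `𝒟` in
every fibre of the support: the composition of the hypergraph `𝒰` on `P` with the hypergraph `𝒟`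
on `Q`. -/
def composition (𝒰 : Finset (Finset P)) (𝒟 : Finset (Finset Q)) : Finset (P → Finset Q) :=
  𝒰.biUnion fun U => sections U 𝒟

variable {𝒰 : Finset (Finset P)} {𝒟 : Finset (Finset Q)} {m t : ℕ}

theorem mem_composition {ψ : P → Finset Q} :
    ψ ∈ composition 𝒰 𝒟 ↔ ∃ U ∈ 𝒰, ψ ∈ sections U 𝒟 := mem_biUnion

theorem card_composition_le (h𝒰 : ∀ U ∈ 𝒰, #U = m) : #(composition 𝒰 𝒟) ≤ #𝒰 * #𝒟 ^ m :=
  card_biUnion_le_card_mul _ _ _ fun U hU => by rw [card_sections, h𝒰 U hU]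

theorem card_composition (h𝒰 : ∀ U ∈ 𝒰, #U = m) (h𝒟 : ∅ ∉ 𝒟) :
    #(composition 𝒰 𝒟) = #𝒰 * #𝒟 ^ m := by
  rw [composition, card_biUnion, sum_const_nat fun U hU => by rw [card_sections, h𝒰 U hU]]
  refine fun U _ V _ hne => disjoint_left.2 fun ψ hψU hψV => hne (ext fun x => ?_)
  rw [mem_iff_ne_empty_of_mem_sections h𝒟 hψU, mem_iff_ne_empty_of_mem_sections h𝒟 hψV]

theorem sum_card_of_mem_composition (h𝒰 : ∀ U ∈ 𝒰, #U = m) (h𝒟 : ∀ Z ∈ 𝒟, #Z = t)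
    {ψ : P → Finset Q} (hψ : ψ ∈ composition 𝒰 𝒟) : ∑ x, #(ψ x) = m * t := by
  obtain ⟨U, hU, hψU⟩ := mem_composition.1 hψ
  rw [sum_card_of_mem_sections hψU,
    sum_const_nat fun x hx => h𝒟 _ ((mem_sections.1 hψU).1 x hx), h𝒰 U hU]

theorem card_filter_mem_composition_le (h𝒰 : ∀ U ∈ 𝒰, #U = m) (x : P) (y : Q) :
    #{ψ ∈ composition 𝒰 𝒟 | y ∈ ψ x} ≤
      #{U ∈ 𝒰 | x ∈ U} * (#{Z ∈ 𝒟 | y ∈ Z} * #𝒟 ^ (m - 1)) := by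
  have hsub : {ψ ∈ composition 𝒰 𝒟 | y ∈ ψ x} ⊆
      {U ∈ 𝒰 | x ∈ U}.biUnion fun U => {ψ ∈ sections U 𝒟 | y ∈ ψ x} := by
    intro ψ hψ
    obtain ⟨hψ, hy⟩ := mem_filter.1 hψ
    obtain ⟨U, hU, hψU⟩ := mem_composition.1 hψ
    have hx : x ∈ U := by
      by_contra hx
      simp [(mem_sections.1 hψU).2 x hx] at hy
    exact mem_biUnion.2 ⟨U, mem_filter.2 ⟨hU, hx⟩, mem_filter.2 ⟨hψU, hy⟩⟩
  refine (card_le_card hsub).trans (card_biUnion_le_card_mul _ _ _ fun U hU => ?_)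
  obtain ⟨hU, hx⟩ := mem_filter.1 hU
  rw [card_filter_mem_sections hx, h𝒰 U hU]

/- If no fibre over a member `U` of `𝒰` is blocked, choosing in each of them a missed member of `𝒟`
gives a missed member of the composition. -/
theorem blocks_filter_blocks [DecidablePred (Blocks 𝒟)] {a : P → Finset Q}
    (hmeet : ∀ φ ∈ composition 𝒰 𝒟, ∃ x, (φ x ∩ a x).Nonempty) :
    Blocks 𝒰 {x | Blocks 𝒟 (a x)} := by
  intro U hU
  by_contra hempty
  have hmissed : ∀ x ∈ U, ∃ Z ∈ 𝒟, Z ⊆ 𝒟.sup id \ a x := fun x hx => by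
    have hx' : ∃ Z ∈ 𝒟, ¬ (Z ∩ a x).Nonempty := by
      by_contra! hblocks
      exact hempty ⟨x, mem_inter.2 ⟨hx, mem_filter.2 ⟨mem_univ x, hblocks⟩⟩⟩
    obtain ⟨Z, hZ, hZa⟩ := hx'
    rw [not_nonempty_iff_eq_empty, ← disjoint_iff_inter_eq_empty] at hZa
    exact ⟨Z, hZ, subset_sdiff.2 ⟨le_sup (f := id) hZ, hZa⟩⟩
  obtain ⟨φ, hφ, hφa⟩ := exists_mem_sections_le hmissed
  obtain ⟨x, hx⟩ := hmeet φ (mem_composition.2 ⟨U, hU, hφ⟩)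
  exact hx.ne_empty (disjoint_iff_inter_eq_empty.1 (subset_sdiff.1 (hφa x)).2)

end Composition

section Kernels

open Finset

variable {P Q : Type*} [Fintype P] [DecidableEq P] [Fintype Q] [DecidableEq Q] {q s : ℕ}
  {L : Finset (Finset P)} {D : Finset (Finset Q)}

namespace IsPlane

theorem empty_notMem (hD : IsPlane s D) : ∅ ∉ D := fun h => by
  simpa using hD.card_line _ h

theorem card_composition_eq (hL : IsPlane q L) (hD : IsPlane s D) :
    #(composition L D) = Fintype.card P * Fintype.card Q ^ (q + 1) := by
  rw [card_composition hL.card_line hD.empty_notMem, hL.card_lines, hD.card_lines, hL.card_points,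
    hD.card_points]

theorem card_filter_mem_composition_mul_le (hL : IsPlane q L) (hD : IsPlane s D) (x : P) (y : Q) :
    #{φ ∈ composition L D | y ∈ φ x} * (Fintype.card P * Fintype.card Q) ≤
      #(composition L D) * ((q + 1) * (s + 1)) := by
  have hle := card_filter_mem_composition_le (𝒟 := D) hL.card_line x y
  rw [hL.card_lines_through, hD.card_lines_through, hD.card_lines, ← hD.card_points,
    add_tsub_cancel_right] at hle
  rw [hL.card_composition_eq hD]
  exact (Nat.mul_le_mul_right _ hle).trans_eq (by ring)

theorem exists_inter_nonempty (hL : IsPlane q L) (hD : IsPlane s D) {φ ψ : P → Finset Q}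
    (hφ : φ ∈ composition L D) (hψ : ψ ∈ composition L D) : ∃ x, (φ x ∩ ψ x).Nonempty := by
  obtain ⟨l, hl, hφ⟩ := mem_composition.1 hφ
  obtain ⟨m, hm, hψ⟩ := mem_composition.1 hψ
  obtain ⟨x, hx⟩ := hL.inter_nonempty hl hm
  rw [mem_inter] at hx
  exact ⟨x, hD.inter_nonempty ((mem_sections.1 hφ).1 x hx.1) ((mem_sections.1 hψ).1 x hx.2)⟩

theorem exists_le_card_sdiff (hL : IsPlane q L) (hD : IsPlane s D) {φ ψ : P → Finset Q}
    (hφ : φ ∈ composition L D) (hψ : ψ ∈ composition L D) (hne : ψ ≠ φ) :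
    ∃ x, ψ x ∈ D ∧ s ≤ #(ψ x \ φ x) := by
  obtain ⟨l, hl, hφl⟩ := mem_composition.1 hφ
  obtain ⟨m, hm, hψm⟩ := mem_composition.1 hψ
  obtain ⟨x, hxm, hx⟩ : ∃ x ∈ m, ψ x ≠ φ x := by
    by_contra! heq
    have hml : m ⊆ l := fun x hx => by
      rw [mem_iff_ne_empty_of_mem_sections hD.empty_notMem hφl, ← heq x hx]
      exact (mem_iff_ne_empty_of_mem_sections hD.empty_notMem hψm).1 hx
    obtain rfl : m = l := eq_of_subset_of_card_le hml
      (by rw [hL.card_line l hl, hL.card_line m hm])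
    refine hne (funext fun x => ?_)
    by_cases hx : x ∈ m
    · exact heq x hx
    · rw [(mem_sections.1 hφl).2 x hx, (mem_sections.1 hψm).2 x hx]
  have hψx := (mem_sections.1 hψm).1 x hxm
  have hinter : #(ψ x ∩ φ x) ≤ 1 := by
    by_cases hxl : x ∈ l
    · exact (hD.card_inter _ hψx _ ((mem_sections.1 hφl).1 x hxl) hx).le
    · simp [(mem_sections.1 hφl).2 x hxl]
  have hsplit := card_sdiff_add_card_inter (ψ x) (φ x)
  rw [hD.card_line _ hψx] at hsplit
  exact ⟨x, hψx, by omega⟩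

end IsPlane

theorem exists_subset_or_exists_powersetCard {h : ℕ} (hD : BlockingBound D h) {S : Finset Q}
    (hS : Blocks D S) : ∃ Z ∈ D ∪ powersetCard h univ, Z ⊆ S := by
  obtain ⟨d, hd, hdS⟩ | hcard := hD S hS
  · exact ⟨d, mem_union_left _ hd, hdS⟩
  · obtain ⟨Z, hZS, hZ⟩ := exists_subset_card_eq hcard
    exact ⟨Z, mem_union_right _ (mem_powersetCard.2 ⟨subset_univ Z, hZ⟩), hZS⟩

theorem exists_le_of_forall_inter_nonempty {b h : ℕ} (hL : BlockingBound L b)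
    (hD : BlockingBound D h) (hplane : IsPlane s D) {a : P → Finset Q}
    (hmeet : ∀ φ ∈ composition L D, ∃ x, (φ x ∩ a x).Nonempty)
    (hno : ∀ φ ∈ composition L D, ¬ φ ≤ a) :
    (∃ l ∈ L, ∃ ψ ∈ sections l (D ∪ powersetCard h univ) \ sections l D, ψ ≤ a) ∨
      ∃ ψ ∈ composition (powersetCard b univ) (powersetCard (s + 1) univ), ψ ≤ a := by
  classical
  obtain ⟨l, hl, hlB⟩ | hb := hL _ (blocks_filter_blocks hmeet)
  · left
    obtain ⟨ψ, hψ, hψa⟩ := exists_mem_sections_le fun x hx =>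
      exists_subset_or_exists_powersetCard hD (mem_filter.1 (hlB hx)).2
    exact ⟨l, hl, ψ, mem_sdiff.2 ⟨hψ, fun hψD => hno ψ (mem_composition.2 ⟨l, hl, hψD⟩) hψa⟩, hψa⟩
  · right
    obtain ⟨U, hUB, hU⟩ := exists_subset_card_eq hb
    have hwide : ∀ x ∈ U, ∃ Z ∈ powersetCard (s + 1) univ, Z ⊆ a x := fun x hx => by
      obtain ⟨Z, hZa, hZ⟩ := exists_subset_card_eq
        (hplane.succ_le_card_of_blocks (mem_filter.1 (hUB hx)).2)
      exact ⟨Z, mem_powersetCard.2 ⟨subset_univ Z, hZ⟩, hZa⟩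
    obtain ⟨ψ, hψ, hψa⟩ := exists_mem_sections_le hwide
    exact ⟨ψ, mem_composition.2 ⟨U, mem_powersetCard.2 ⟨subset_univ U, hU⟩, hψ⟩, hψa⟩

end Kernels

section Trace

open Finset

variable {P Q α : Type*} [Fintype Q] [DecidableEq α]

/-- The fibres of the preimage of `A` under `ι`. -/
def fiberTrace (ι : P × Q ↪ α) (A : Finset α) (x : P) : Finset Q := {y | ι (x, y) ∈ A}

theorem mem_fiberTrace {ι : P × Q ↪ α} {A : Finset α} {x : P} {y : Q} :
    y ∈ fiberTrace ι A x ↔ ι (x, y) ∈ A := by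
  simp [fiberTrace]

end Trace

section Embedding

open Finset

variable {P Q α : Type*} [Fintype P] [Fintype Q] [DecidableEq Q]

/-- The image under `ι` of the subset `{(x, y) | y ∈ ψ x}` of `P × Q`. -/
def embedGraph (ι : P × Q ↪ α) (ψ : P → Finset Q) : Finset α :=
  ({z | z.2 ∈ ψ z.1} : Finset (P × Q)).map ι

variable {ι : P × Q ↪ α} {φ ψ : P → Finset Q} {A E : Finset α}

theorem apply_mem_embedGraph {x : P} {y : Q} : ι (x, y) ∈ embedGraph ι ψ ↔ y ∈ ψ x := by
  simp [embedGraph]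

theorem mem_embedGraph {i : α} : i ∈ embedGraph ι ψ ↔ ∃ x, ∃ y ∈ ψ x, ι (x, y) = i := by
  simp [embedGraph]

theorem card_embedGraph : #(embedGraph ι ψ) = ∑ x, #(ψ x) := by
  rw [embedGraph, card_map, card_filter, Fintype.sum_prod_type]
  simp

theorem embedGraph_subset_iff_forall : embedGraph ι ψ ⊆ A ↔ ∀ x, ∀ y ∈ ψ x, ι (x, y) ∈ A := by
  simp only [subset_iff, mem_embedGraph, forall_exists_index, and_imp]
  exact ⟨fun h x y hy => h x y hy rfl, fun h i x y hy hi => hi ▸ h x y hy⟩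

theorem embedGraph_injective : Function.Injective (embedGraph ι) := fun φ ψ h =>
  funext fun x => ext fun y => by rw [← apply_mem_embedGraph (ι := ι), h, apply_mem_embedGraph]

theorem embedGraph_subset (hι : ∀ z, ι z ∈ E) : embedGraph ι ψ ⊆ E :=
  embedGraph_subset_iff_forall.2 fun _ _ _ => hι _

variable [DecidableEq α]

theorem embedGraph_subset_iff_le : embedGraph ι ψ ⊆ A ↔ ψ ≤ fiberTrace ι A := by
  rw [embedGraph_subset_iff_forall]
  exact forall₂_congr fun x y => imp_congr_right fun _ => mem_fiberTrace.symm

theorem embedGraph_inter_nonempty :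
    (embedGraph ι ψ ∩ A).Nonempty ↔ ∃ x, (ψ x ∩ fiberTrace ι A x).Nonempty := by
  simp only [Finset.Nonempty, mem_inter, mem_embedGraph, mem_fiberTrace]
  exact ⟨fun ⟨_, ⟨x, y, hy, hi⟩, hA⟩ => ⟨x, y, hy, hi ▸ hA⟩,
    fun ⟨x, y, hy, hA⟩ => ⟨_, ⟨x, y, hy, rfl⟩, hA⟩⟩

end Embedding

/-- The number of `r`-element subsets of an `n`-element set that contain a fixed `j`-element
subset, written so that it vanishes for `r < j ≤ n`. -/
def supersetCount (n r j : ℕ) : ℕ := (n - j).choose (n - r)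

section SupersetCount

open Finset

variable {α : Type*} [DecidableEq α] {n r j : ℕ}

theorem card_filter_subset_powersetCard {E K : Finset α} (hK : K ⊆ E) (hr : r ≤ #E) :
    #{A ∈ powersetCard r E | K ⊆ A} = supersetCount #E r #K := by
  have hcompl : #{A ∈ powersetCard r E | K ⊆ A} = #(powersetCard (#E - r) (E \ K)) := by
    refine card_nbij' (E \ ·) (E \ ·) (fun A hA => ?_) (fun B hB => ?_) (fun A hA => ?_)
      fun B hB => ?_
    · simp only [coe_filter, Set.mem_ofPred_eq, mem_powersetCard] at hA
      exact mem_powersetCard.2 ⟨sdiff_subset_sdiff subset_rfl hA.2,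
        by rw [card_sdiff_of_subset hA.1.1, hA.1.2]⟩
    · obtain ⟨hBK, hB⟩ := mem_powersetCard.1 hB
      have hBE := hBK.trans sdiff_subset
      simp only [coe_filter, Set.mem_ofPred_eq, mem_powersetCard]
      refine ⟨⟨sdiff_subset, ?_⟩, fun x hx => mem_sdiff.2 ⟨hK hx, fun hxB =>
        (mem_sdiff.1 (hBK hxB)).2 hx⟩⟩
      rw [card_sdiff_of_subset hBE, hB]
      omega
    · exact Finset.sdiff_sdiff_eq_self (mem_powersetCard.1 (mem_filter.1 hA).1).1
    · exact Finset.sdiff_sdiff_eq_self ((mem_powersetCard.1 hB).1.trans sdiff_subset)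
  rw [hcompl, card_powersetCard, card_sdiff_of_subset hK, supersetCount]

theorem supersetCount_pos (hjr : j ≤ r) : 0 < supersetCount n r j :=
  Nat.choose_pos (by omega)

theorem sub_mul_supersetCount_succ (hr : r ≤ n) :
    (n - j) * supersetCount n r (j + 1) = (r - j) * supersetCount n r j := by
  obtain hj | hj := lt_or_ge j n
  · have hchoose := Nat.choose_mul_succ_eq (n - (j + 1)) (n - r)
    rw [show n - (j + 1) + 1 = n - j by omega, show n - j - (n - r) = r - j by omega] at hchoose
    rw [supersetCount, supersetCount, mul_comm, hchoose, mul_comm]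
  · rw [Nat.sub_eq_zero_of_le hj, Nat.sub_eq_zero_of_le (hr.trans hj), zero_mul, zero_mul]

theorem sub_mul_supersetCount_le (hr : r ≤ n) :
    (r - j) * supersetCount n r j ≤ n * supersetCount n r (j + 1) :=
  (sub_mul_supersetCount_succ hr).symm.trans_le (Nat.mul_le_mul_right _ (Nat.sub_le n j))

theorem supersetCount_antitone : Antitone (supersetCount n r) := fun _ _ hij =>
  Nat.choose_le_choose _ (Nat.sub_le_sub_left hij n)

theorem supersetCount_succ_mul_le (hn : r ^ 2 ≤ n) :
    supersetCount n r (j + 1) * r ≤ supersetCount n r j := by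
  obtain hr | hr := le_or_gt r 1
  · exact (mul_le_of_le_one_right' hr).trans (supersetCount_antitone j.le_succ)
  have hrn : r < n := by nlinarith
  have hrec := sub_mul_supersetCount_succ (j := j) hrn.le
  obtain hj | hj := lt_or_ge j r
  · have hratio : r * (r - j) ≤ n - j := by
      obtain ⟨i, rfl⟩ := Nat.exists_eq_add_of_lt hj
      rw [show j + i + 1 - j = i + 1 by omega]
      refine Nat.le_sub_of_add_le ?_
      nlinarith
    refine Nat.le_of_mul_le_mul_left ?_ (Nat.sub_pos_of_lt hj)
    calc (r - j) * (supersetCount n r (j + 1) * r)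
        = r * (r - j) * supersetCount n r (j + 1) := by ring
      _ ≤ (n - j) * supersetCount n r (j + 1) := Nat.mul_le_mul_right _ hratio
      _ = (r - j) * supersetCount n r j := hrec
  · rw [supersetCount, Nat.choose_eq_zero_of_lt (by omega), zero_mul]
    exact Nat.zero_le _

theorem supersetCount_mul_pow_le {i j' : ℕ} (hn : r ^ 2 ≤ n) (hj : j + i ≤ j') :
    supersetCount n r j' * r ^ i ≤ supersetCount n r j := by
  refine (Nat.mul_le_mul_right _ (supersetCount_antitone hj)).trans ?_
  clear hj
  induction i with
  | zero => simp
  | succ i ih =>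
    calc supersetCount n r (j + (i + 1)) * r ^ (i + 1)
        = supersetCount n r (j + i + 1) * r * r ^ i := by rw [pow_succ', ← mul_assoc, ← add_assoc]
      _ ≤ supersetCount n r (j + i) * r ^ i :=
        Nat.mul_le_mul_right _ (supersetCount_succ_mul_le hn)
      _ ≤ supersetCount n r j := ih

end SupersetCount

section KernelCounting

open Finset

variable {α : Type*} [DecidableEq α] {E : Finset α} {r k s : ℕ} {𝒦 F : Finset (Finset α)}

/-- The family of the `r`-element subsets of `E` that contain a member of `𝒦`, to be thought of as
generated by the kernels `K ∈ 𝒦`. -/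
def generatedFamily (E : Finset α) (r : ℕ) (𝒦 : Finset (Finset α)) : Finset (Finset α) :=
  {A ∈ powersetCard r E | ∃ K ∈ 𝒦, K ⊆ A}

/-- The family of the `r`-element subsets of `E` that meet all members of `𝒦` and contain none. -/
def properTransversals (E : Finset α) (r : ℕ) (𝒦 : Finset (Finset α)) : Finset (Finset α) :=
  {A ∈ powersetCard r E | (∀ K ∈ 𝒦, (K ∩ A).Nonempty) ∧ ∀ K ∈ 𝒦, ¬ K ⊆ A}

theorem card_filter_exists_subset_le {β : Type*} {I : Finset β} {K : β → Finset α}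
    (hK : ∀ b ∈ I, K b ⊆ E) (hr : r ≤ #E) :
    #{A ∈ powersetCard r E | ∃ b ∈ I, K b ⊆ A} ≤ ∑ b ∈ I, supersetCount #E r #(K b) := by
  have hsub : {A ∈ powersetCard r E | ∃ b ∈ I, K b ⊆ A} ⊆
      I.biUnion fun b => {A ∈ powersetCard r E | K b ⊆ A} := fun A hA => by
    obtain ⟨hA, b, hb, hbA⟩ := mem_filter.1 hA
    exact mem_biUnion.2 ⟨b, hb, mem_filter.2 ⟨hA, hbA⟩⟩
  refine (card_le_card hsub).trans (card_biUnion_le.trans_eq (sum_congr rfl fun b hb => ?_))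
  exact card_filter_subset_powersetCard (hK b hb) hr

theorem card_generatedFamily_le (h𝒦E : ∀ K ∈ 𝒦, K ⊆ E) (hr : r ≤ #E) :
    #(generatedFamily E r 𝒦) ≤ ∑ K ∈ 𝒦, supersetCount #E r #K :=
  card_filter_exists_subset_le h𝒦E hr

theorem card_generatedFamily_biUnion_le {β : Type*} (I : Finset β) (𝒮 : β → Finset (Finset α)) :
    #(generatedFamily E r (I.biUnion 𝒮)) ≤ ∑ b ∈ I, #(generatedFamily E r (𝒮 b)) := by
  refine le_trans (card_le_card fun A hA => ?_) card_biUnion_le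
  obtain ⟨hA, K, hK, hKA⟩ := mem_filter.1 hA
  obtain ⟨b, hb, hK⟩ := mem_biUnion.1 hK
  exact mem_biUnion.2 ⟨b, hb, mem_filter.2 ⟨hA, K, hK, hKA⟩⟩

theorem card_filter_exists_subset_le_mul {β : Type*} {I : Finset β} {K : β → Finset α} {j : ℕ}
    (hK : ∀ b ∈ I, K b ⊆ E) (hr : r ≤ #E) (hj : ∀ b ∈ I, j ≤ #(K b)) :
    #{A ∈ powersetCard r E | ∃ b ∈ I, K b ⊆ A} ≤ #I * supersetCount #E r j :=
  (card_filter_exists_subset_le hK hr).trans <|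
    sum_le_card_nsmul _ _ _ fun b hb => supersetCount_antitone (hj b hb)

theorem card_filter_mem_le (hr : r ≤ #E) (h𝒦E : ∀ K ∈ 𝒦, K ⊆ E) (h𝒦 : ∀ K ∈ 𝒦, #K = k)
    (hF : F ⊆ powersetCard r E) (hmeet : ∀ A ∈ F, ∀ K ∈ 𝒦, (K ∩ A).Nonempty) {i : α}
    (hi : i ∈ E) :
    #{A ∈ F | i ∈ A} ≤ #{K ∈ 𝒦 | i ∈ K} * supersetCount #E r k +
      #𝒦 * supersetCount #E r (k + 1) + #(properTransversals E r 𝒦) := by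
  have hsub : {A ∈ F | i ∈ A} ⊆
      {A ∈ powersetCard r E | ∃ K ∈ 𝒦, insert i K ⊆ A} ∪ properTransversals E r 𝒦 := by
    intro A hA
    obtain ⟨hA, hiA⟩ := mem_filter.1 hA
    by_cases hKA : ∃ K ∈ 𝒦, K ⊆ A
    · obtain ⟨K, hK, hKA⟩ := hKA
      exact mem_union_left _ (mem_filter.2 ⟨hF hA, K, hK, insert_subset hiA hKA⟩)
    · push Not at hKA
      exact mem_union_right _ (mem_filter.2 ⟨hF hA, hmeet A hA, hKA⟩)
  refine (card_le_card hsub).trans ((card_union_le _ _).trans (Nat.add_le_add_right ?_ _))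
  refine (card_filter_exists_subset_le (fun K hK => insert_subset hi (h𝒦E K hK)) hr).trans ?_
  rw [card_eq_sum_ones 𝒦, card_filter, sum_mul, sum_mul, ← sum_add_distrib]
  refine sum_le_sum fun K hK => ?_
  by_cases hiK : i ∈ K
  · simp [hiK, h𝒦 K hK]
  · simp [hiK, h𝒦 K hK]

theorem supersetCount_succ_le_card_filter_add {K : Finset α} {𝒵 : Finset (Finset α)} {i : α}
    (hr : r ≤ #E) (hKE : K ⊆ E) (h𝒵E : ∀ Z ∈ 𝒵, Z ⊆ E)
    (hsep : ∀ K' ∈ 𝒦, K' ≠ K → ∃ Z ∈ 𝒵, Z ⊆ K' ∧ s ≤ #(Z \ K)) (hi : i ∈ E) :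
    supersetCount #E r (#K + 1) ≤
      #{A ∈ powersetCard r E | insert i K ⊆ A ∧ ∀ K' ∈ 𝒦, K' ⊆ A → K' = K} +
        #𝒵 * supersetCount #E r (#K + s) := by
  have hsub : {A ∈ powersetCard r E | insert i K ⊆ A} ⊆
      {A ∈ powersetCard r E | insert i K ⊆ A ∧ ∀ K' ∈ 𝒦, K' ⊆ A → K' = K} ∪
        {A ∈ powersetCard r E | ∃ Z ∈ ({Z ∈ 𝒵 | s ≤ #(Z \ K)}), K ∪ Z \ K ⊆ A} := by
    intro A hA
    obtain ⟨hA, hKA⟩ := mem_filter.1 hA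
    by_cases huniq : ∀ K' ∈ 𝒦, K' ⊆ A → K' = K
    · exact mem_union_left _ (mem_filter.2 ⟨hA, hKA, huniq⟩)
    · push Not at huniq
      obtain ⟨K', hK', hK'A, hne⟩ := huniq
      obtain ⟨Z, hZ, hZK', hs⟩ := hsep K' hK' hne
      exact mem_union_right _ (mem_filter.2 ⟨hA, Z, mem_filter.2 ⟨hZ, hs⟩,
        union_subset ((subset_insert i K).trans hKA) (sdiff_subset.trans (hZK'.trans hK'A))⟩)
  calc supersetCount #E r (#K + 1)
      ≤ supersetCount #E r #(insert i K) := supersetCount_antitone (card_insert_le i K)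
    _ = #{A ∈ powersetCard r E | insert i K ⊆ A} :=
      (card_filter_subset_powersetCard (insert_subset hi hKE) hr).symm
    _ ≤ _ := (card_le_card hsub).trans (card_union_le _ _)
    _ ≤ _ := by
      refine Nat.add_le_add_left ((card_filter_exists_subset_le_mul (j := #K + s) ?_ hr ?_).trans
        (Nat.mul_le_mul_right _ (card_filter_le _ _))) _
      · exact fun Z hZ => union_subset hKE (sdiff_subset.trans (h𝒵E Z (mem_filter.1 hZ).1))
      · intro Z hZ
        rw [card_union_of_disjoint disjoint_sdiff]
        exact Nat.add_le_add_left (mem_filter.1 hZ).2 _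

theorem card_mul_supersetCount_succ_le {𝒵 : Finset (Finset α)} {i : α} (hr : r ≤ #E)
    (h𝒦E : ∀ K ∈ 𝒦, K ⊆ E) (h𝒦 : ∀ K ∈ 𝒦, #K = k) (h𝒵E : ∀ Z ∈ 𝒵, Z ⊆ E)
    (hsep : ∀ K ∈ 𝒦, ∀ K' ∈ 𝒦, K' ≠ K → ∃ Z ∈ 𝒵, Z ⊆ K' ∧ s ≤ #(Z \ K))
    (hF : generatedFamily E r 𝒦 ⊆ F) (hi : i ∈ E) :
    #𝒦 * supersetCount #E r (k + 1) ≤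
      #{A ∈ F | i ∈ A} + #𝒦 * (#𝒵 * supersetCount #E r (k + s)) := by
  let exclusive (K : Finset α) : Finset (Finset α) :=
    {A ∈ powersetCard r E | insert i K ⊆ A ∧ ∀ K' ∈ 𝒦, K' ⊆ A → K' = K}
  have hle : ∑ K ∈ 𝒦, #(exclusive K) ≤ #{A ∈ F | i ∈ A} := by
    rw [← card_biUnion]
    · refine card_le_card (biUnion_subset.2 fun K hK A hA => ?_)
      obtain ⟨hA, hKA, -⟩ := mem_filter.1 hA
      obtain ⟨hiA, hKA⟩ := insert_subset_iff.1 hKA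
      exact mem_filter.2 ⟨hF (mem_filter.2 ⟨hA, K, hK, hKA⟩), hiA⟩
    · refine fun K hK K' _ hne => disjoint_left.2 fun A hA hA' => hne ?_
      exact (mem_filter.1 hA').2.2 K hK ((subset_insert i K).trans (mem_filter.1 hA).2.1)
  calc #𝒦 * supersetCount #E r (k + 1)
      = ∑ _K ∈ 𝒦, supersetCount #E r (k + 1) := by rw [sum_const, smul_eq_mul]
    _ ≤ ∑ K ∈ 𝒦, (#(exclusive K) + #𝒵 * supersetCount #E r (k + s)) := by
      refine sum_le_sum fun K hK => ?_
      rw [← h𝒦 K hK]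
      exact supersetCount_succ_le_card_filter_add hr (h𝒦E K hK) h𝒵E (hsep K hK) hi
    _ ≤ _ := by
      rw [sum_add_distrib, sum_const, smul_eq_mul]
      exact Nat.add_le_add_right hle _

theorem inter_nonempty_of_generatedFamily_subset {K A : Finset α} (hr : 2 * r ≤ #E) (hK : K ∈ 𝒦)
    (hKE : K ⊆ E) (hKr : #K ≤ r) (hA : #A = r)
    (hmeet : ∀ B ∈ generatedFamily E r 𝒦, (B ∩ A).Nonempty) : (K ∩ A).Nonempty := by
  by_contra hempty
  rw [not_nonempty_iff_eq_empty, ← disjoint_iff_inter_eq_empty] at hempty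
  have hroom : r ≤ #(E \ A) := by
    have := le_card_sdiff A E
    omega
  obtain ⟨B, hKB, hBA, hB⟩ := exists_subsuperset_card_eq (subset_sdiff.2 ⟨hKE, hempty⟩) hKr hroom
  obtain ⟨hBE, hBA⟩ := subset_sdiff.1 hBA
  exact (hmeet B (mem_filter.2 ⟨mem_powersetCard.2 ⟨hBE, hB⟩, K, hK, hKB⟩)).ne_empty
    (disjoint_iff_inter_eq_empty.1 hBA)

end KernelCounting

section MaximalFamilies

open Finset

theorem isIntersecting_generatedFamily {E : Finset ℕ} {r : ℕ} {𝒦 : Finset (Finset ℕ)}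
    (h𝒦 : IsIntersecting 𝒦) : IsIntersecting (generatedFamily E r 𝒦) := fun A hA B hB => by
  obtain ⟨-, K, hK, hKA⟩ := mem_filter.1 hA
  obtain ⟨-, K', hK', hKB⟩ := mem_filter.1 hB
  exact (h𝒦 K hK K' hK').mono (inter_subset_inter hKA hKB)

theorem exists_isMaxIntersecting {n r : ℕ} {G : Finset (Finset ℕ)} (hr : 0 < r)
    (hG : IsFamily n r G) (hGi : IsIntersecting G) :
    ∃ F, G ⊆ F ∧ IsFamily n r F ∧ IsMaxIntersecting n r F := by
  classical
  let families : Finset (Finset (Finset ℕ)) :=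
    {F ∈ (powersetCard r (Icc 1 n)).powerset | IsIntersecting F}
  have mem_families (F) : F ∈ families ↔ IsFamily n r F ∧ IsIntersecting F := by
    simp only [families, mem_filter, mem_powerset, subset_iff, mem_powersetCard, IsFamily]
  obtain ⟨F, hGF, hF, hmax⟩ := exists_le_maximal families ((mem_families G).2 ⟨hG, hGi⟩)
  obtain ⟨hFfam, hFi⟩ := (mem_families F).1 hF
  refine ⟨F, hGF, hFfam, hFi, fun A hAE hA hAF => ?_⟩
  by_contra! hmeet
  refine hAF (hmax ((mem_families (insert A F)).2 ⟨?_, ?_⟩) (subset_insert A F)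
    (mem_insert_self A F))
  · exact forall_mem_insert .. |>.2 ⟨⟨hAE, hA⟩, hFfam⟩
  · have hAA : (A ∩ A).Nonempty := by rwa [inter_self, ← card_pos, hA]
    refine forall_mem_insert .. |>.2 ⟨forall_mem_insert .. |>.2 ⟨hAA, fun B hB => ?_⟩,
      fun B hB => forall_mem_insert .. |>.2 ⟨hmeet B hB, hFi B hB⟩⟩
    exact inter_comm B A ▸ hmeet B hB

theorem mul_maxDeg_le_mul_minDeg {n a b : ℕ} {F : Finset (Finset ℕ)} (hn : 0 < n)
    (h : ∀ i ∈ Icc 1 n, ∀ j ∈ Icc 1 n, a * degree F i ≤ b * degree F j) :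
    a * maxDeg n F ≤ b * minDeg n F := by
  have hne : (degree F '' Set.Icc 1 n).Nonempty := ⟨_, 1, ⟨le_rfl, hn⟩, rfl⟩
  obtain ⟨i, hi, hmax⟩ := Nat.sSup_mem hne ((Set.finite_Icc 1 n).image _).bddAbove
  obtain ⟨j, hj, hmin⟩ := Nat.sInf_mem hne
  rw [maxDeg, minDeg, ← hmax, ← hmin]
  exact h i (mem_Icc.2 hi) j (mem_Icc.2 hj)

theorem covers_of_degree_pos {n : ℕ} {F : Finset (Finset ℕ)}
    (h : ∀ i ∈ Icc 1 n, 0 < degree F i) : Covers n F := fun i hi => by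
  simpa [degree, card_pos, Finset.Nonempty] using h i hi

end MaximalFamilies

section Transversals

open Finset

theorem add_pow_sub_pow_le {M τ : ℝ} {m : ℕ} (hM : 1 ≤ M) (hτ : 0 ≤ τ) (hmτ : m * τ ≤ 1) :
    (M + τ) ^ m - M ^ m ≤ M ^ m * (2 * (m * τ)) := by
  have hexp : Real.exp (m * τ) - 1 ≤ 2 * (m * τ) := by
    have hle := Real.abs_exp_sub_one_le (x := m * τ) (by rwa [abs_of_nonneg (by positivity)])
    rw [abs_of_nonneg (a := m * τ) (by positivity)] at hle
    exact (le_abs_self _).trans hle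
  have hpow : (M + τ) ^ m ≤ M ^ m * Real.exp (m * τ) := by
    rw [Real.exp_nat_mul, ← mul_pow]
    refine pow_le_pow_left₀ (by positivity) ?_ m
    nlinarith [Real.add_one_le_exp τ]
  calc (M + τ) ^ m - M ^ m ≤ M ^ m * (Real.exp (m * τ) - 1) := by linarith
    _ ≤ M ^ m * (2 * (m * τ)) := by gcongr

theorem cast_supersetCount_add_le {n r : ℕ} (hr : 0 < r) (hn : r ^ 2 ≤ n) (j i : ℕ) :
    (supersetCount n r (j + i) : ℝ) ≤ supersetCount n r j * (r : ℝ)⁻¹ ^ i := by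
  rw [inv_pow, ← div_eq_mul_inv, le_div_iff₀ (by positivity)]
  exact_mod_cast supersetCount_mul_pow_le hn le_rfl

theorem cast_supersetCount_sum_le {P Q : Type*} {n r t : ℕ} {ψ : P → Finset Q}
    {U : Finset P} (hr : 0 < r) (hn : r ^ 2 ≤ n) (hψ : ∀ x ∈ U, t ≤ #(ψ x)) :
    (supersetCount n r (∑ x ∈ U, #(ψ x)) : ℝ) ≤
      supersetCount n r (#U * t) * ∏ x ∈ U, (r : ℝ)⁻¹ ^ (#(ψ x) - t) := by
  have hsum : ∑ x ∈ U, #(ψ x) = #U * t + ∑ x ∈ U, (#(ψ x) - t) := by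
    rw [← smul_eq_mul, ← sum_const, ← sum_add_distrib]
    exact sum_congr rfl fun x hx => (Nat.add_sub_of_le (hψ x hx)).symm
  rw [hsum, prod_pow_eq_pow_sum]
  exact cast_supersetCount_add_le hr hn _ _

variable {P Q : Type*} [Fintype P] [DecidableEq P]

theorem sum_prod_sections_sdiff {R : Type*} [CommRing R] [DecidableEq Q] (U : Finset P)
    {𝒟 ℰ : Finset (Finset Q)} (h : 𝒟 ⊆ ℰ) (w : Finset Q → R) :
    ∑ ψ ∈ sections U ℰ \ sections U 𝒟, ∏ x ∈ U, w (ψ x) =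
      (∑ Z ∈ ℰ, w Z) ^ #U - (∑ Z ∈ 𝒟, w Z) ^ #U := by
  rw [sum_sdiff_eq_sub (sections_subset_sections U h)]
  simp only [sum_prod_sections U _ fun _ => w, prod_const]

variable [Fintype Q] [DecidableEq Q] {D : Finset (Finset Q)} {r t h g : ℕ}

theorem sum_pow_card_sub_le (hD : ∀ Z ∈ D, #Z = t) (hQ : 2 ^ Fintype.card Q ≤ r)
    (hgh : t + (g + 2) ≤ h) :
    ∑ Z ∈ D ∪ powersetCard h univ, (r : ℝ)⁻¹ ^ (#Z - t) ≤ #D + (r : ℝ)⁻¹ ^ (g + 1) := by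
  have hr : (1 : ℝ) ≤ r := by exact_mod_cast (Nat.one_le_two_pow).trans hQ
  have hwide : ∑ Z ∈ powersetCard h (univ : Finset Q), (r : ℝ)⁻¹ ^ (#Z - t) ≤
      (r : ℝ)⁻¹ ^ (g + 1) := by
    calc ∑ Z ∈ powersetCard h (univ : Finset Q), (r : ℝ)⁻¹ ^ (#Z - t)
        ≤ ∑ _Z ∈ powersetCard h (univ : Finset Q), (r : ℝ)⁻¹ ^ (g + 2) := by
          refine sum_le_sum fun Z hZ => pow_le_pow_of_le_one (by positivity)
            (inv_le_one_of_one_le₀ hr) ?_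
          rw [(mem_powersetCard.1 hZ).2]
          omega
      _ = (Fintype.card Q).choose h * (r : ℝ)⁻¹ ^ (g + 2) := by simp
      _ ≤ r * (r : ℝ)⁻¹ ^ (g + 2) := by
          gcongr
          exact_mod_cast (Nat.choose_le_two_pow _ _).trans hQ
      _ = (r : ℝ)⁻¹ ^ (g + 1) := by rw [pow_succ' _ (g + 1), mul_inv_cancel_left₀ (by positivity)]
  calc ∑ Z ∈ D ∪ powersetCard h univ, (r : ℝ)⁻¹ ^ (#Z - t)
      ≤ ∑ Z ∈ D, (r : ℝ)⁻¹ ^ (#Z - t) + ∑ Z ∈ powersetCard h univ, (r : ℝ)⁻¹ ^ (#Z - t) := by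
        rw [← sum_union_inter]
        exact le_add_of_nonneg_right (sum_nonneg fun Z _ => by positivity)
    _ ≤ #D + (r : ℝ)⁻¹ ^ (g + 1) := by
        refine add_le_add (le_of_eq ?_) hwide
        rw [sum_congr rfl fun Z hZ => by rw [hD Z hZ, Nat.sub_self, pow_zero], sum_const,
          nsmul_one]

theorem sum_cast_supersetCount_sections_sdiff_le {n : ℕ} {U : Finset P} (hn : r ^ 2 ≤ n)
    (hD : ∀ Z ∈ D, #Z = t) (hne : D.Nonempty) (hQ : 2 ^ Fintype.card Q ≤ r)
    (hgh : t + (g + 2) ≤ h) (hU : #U ≤ r) :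
    ∑ ψ ∈ sections U (D ∪ powersetCard h univ) \ sections U D,
      (supersetCount n r (∑ x, #(ψ x)) : ℝ) ≤
        supersetCount n r (#U * t) * (#D ^ #U * (2 * (r : ℝ)⁻¹ ^ g)) := by
  have hr : 0 < r := (Nat.two_pow_pos _).trans_le hQ
  have hτ : #U * (r : ℝ)⁻¹ ^ (g + 1) ≤ (r : ℝ)⁻¹ ^ g := by
    calc #U * (r : ℝ)⁻¹ ^ (g + 1) ≤ r * (r : ℝ)⁻¹ ^ (g + 1) := by gcongr
      _ = (r : ℝ)⁻¹ ^ g := by rw [pow_succ', mul_inv_cancel_left₀ (by positivity)]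
  have hτ_one : #U * (r : ℝ)⁻¹ ^ (g + 1) ≤ 1 :=
    hτ.trans (pow_le_one₀ (by positivity) (inv_le_one_of_one_le₀ (by exact_mod_cast hr)))
  have hcard : ∀ Z ∈ D ∪ powersetCard h univ, t ≤ #Z := fun Z hZ => by
    obtain hZ | hZ := mem_union.1 hZ
    · exact (hD Z hZ).ge
    · rw [(mem_powersetCard.1 hZ).2]
      omega
  have hweight : ∑ Z ∈ D, (r : ℝ)⁻¹ ^ (#Z - t) = #D := by
    rw [sum_congr rfl fun Z hZ => by rw [hD Z hZ, Nat.sub_self, pow_zero], sum_const, nsmul_one]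
  calc _ ≤ ∑ ψ ∈ sections U (D ∪ powersetCard h univ) \ sections U D,
        supersetCount n r (#U * t) * ∏ x ∈ U, (r : ℝ)⁻¹ ^ (#(ψ x) - t) := by
        refine sum_le_sum fun ψ hψ => ?_
        obtain ⟨hψ, -⟩ := mem_sdiff.1 hψ
        rw [sum_card_of_mem_sections hψ]
        exact cast_supersetCount_sum_le hr hn fun x hx => hcard _ ((mem_sections.1 hψ).1 x hx)
    _ = supersetCount n r (#U * t) *
        ((∑ Z ∈ D ∪ powersetCard h univ, (r : ℝ)⁻¹ ^ (#Z - t)) ^ #U - (#D : ℝ) ^ #U) := by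
        rw [← mul_sum,
          sum_prod_sections_sdiff U subset_union_left fun Z => (r : ℝ)⁻¹ ^ (#Z - t), hweight]
    _ ≤ supersetCount n r (#U * t) *
        ((#D + (r : ℝ)⁻¹ ^ (g + 1)) ^ #U - (#D : ℝ) ^ #U) := by
        gcongr
        exact sum_pow_card_sub_le hD hQ hgh
    _ ≤ supersetCount n r (#U * t) * (#D ^ #U * (2 * (#U * (r : ℝ)⁻¹ ^ (g + 1)))) := by
        gcongr
        exact add_pow_sub_pow_le (by exact_mod_cast hne.card_pos) (by positivity) hτ_one
    _ ≤ _ := by gcongr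

theorem sum_supersetCount_sections_sdiff_mul_le {n : ℕ} {U : Finset P} (hn : r ^ 2 ≤ n)
    (hD : ∀ Z ∈ D, #Z = t) (hne : D.Nonempty) (hQ : 2 ^ Fintype.card Q ≤ r)
    (hgh : t + (g + 2) ≤ h) (hU : #U ≤ r) :
    (∑ ψ ∈ sections U (D ∪ powersetCard h univ) \ sections U D,
      supersetCount n r (∑ x, #(ψ x))) * r ^ g ≤ 2 * #D ^ #U * supersetCount n r (#U * t) := by
  have hr : 0 < r := (Nat.two_pow_pos _).trans_le hQ
  have hcancel : (r : ℝ)⁻¹ ^ g * (r : ℝ) ^ g = 1 := by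
    rw [← mul_pow, inv_mul_cancel₀ (by positivity), one_pow]
  rify
  calc _ ≤ supersetCount n r (#U * t) * (#D ^ #U * (2 * (r : ℝ)⁻¹ ^ g)) * (r : ℝ) ^ g := by
        gcongr
        exact sum_cast_supersetCount_sections_sdiff_le hn hD hne hQ hgh hU
    _ = 2 * #D ^ #U * supersetCount n r (#U * t) * ((r : ℝ)⁻¹ ^ g * (r : ℝ) ^ g) := by ring
    _ = 2 * #D ^ #U * supersetCount n r (#U * t) := by rw [hcancel, mul_one]

theorem sum_supersetCount_composition_mul_le {n b j : ℕ} (hn : r ^ 2 ≤ n)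
    (hP : Fintype.card P ≤ r ^ 2) (hQ : 2 ^ Fintype.card Q ≤ r) (hj : j + (3 * b + g) ≤ b * t) :
    (∑ ψ ∈ composition (powersetCard b (univ : Finset P)) (powersetCard t (univ : Finset Q)),
      supersetCount n r (∑ x, #(ψ x))) * r ^ g ≤ supersetCount n r j := by
  have hU : ∀ U ∈ powersetCard b (univ : Finset P), #U = b := fun U hU => (mem_powersetCard.1 hU).2
  have hcard : #(composition (powersetCard b (univ : Finset P)) (powersetCard t (univ : Finset Q)))
      ≤ r ^ (3 * b) := by
    calc _ ≤ (Fintype.card P).choose b * (Fintype.card Q).choose t ^ b := by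
          simpa using card_composition_le (𝒟 := powersetCard t (univ : Finset Q)) hU
      _ ≤ (r ^ 2) ^ b * r ^ b := by
          gcongr
          · exact (Nat.choose_le_pow _ _).trans (Nat.pow_le_pow_left hP b)
          · exact (Nat.choose_le_two_pow _ _).trans hQ
      _ = r ^ (3 * b) := by ring
  rw [sum_congr rfl fun ψ hψ => by
    rw [sum_card_of_mem_composition hU (fun Z hZ => (mem_powersetCard.1 hZ).2) hψ],
    sum_const, smul_eq_mul]
  calc _ ≤ r ^ (3 * b) * supersetCount n r (b * t) * r ^ g := by gcongr
    _ = supersetCount n r (b * t) * r ^ (3 * b + g) := by ring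
    _ ≤ supersetCount n r j := supersetCount_mul_pow_le hn hj

end Transversals

section EmbeddedFamilies

open Finset

variable {P Q α : Type*} [Fintype P] [DecidableEq α]

/-- The images under `ι` of the sets `{x} × Z` with `Z ∈ 𝒟`. -/
def embeddedFibers (ι : P × Q ↪ α) (𝒟 : Finset (Finset Q)) : Finset (Finset α) :=
  (univ ×ˢ 𝒟).image fun z => z.2.map ((Function.Embedding.sectR z.1 Q).trans ι)

theorem card_embeddedFibers_le (ι : P × Q ↪ α) (𝒟 : Finset (Finset Q)) :
    #(embeddedFibers ι 𝒟) ≤ Fintype.card P * #𝒟 :=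
  card_image_le.trans_eq (card_product _ _)

variable [Fintype Q] [DecidableEq Q] {ι : P × Q ↪ α} {E : Finset α} {r : ℕ}

theorem card_generatedFamily_image_embedGraph_le (hι : ∀ z, ι z ∈ E) (hr : r ≤ #E)
    (Ψ : Finset (P → Finset Q)) :
    #(generatedFamily E r (Ψ.image (embedGraph ι))) ≤
      ∑ ψ ∈ Ψ, supersetCount #E r (∑ x, #(ψ x)) := by
  refine (card_generatedFamily_le (forall_mem_image.2 fun ψ _ => embedGraph_subset hι)
    hr).trans_eq ?_
  rw [sum_image embedGraph_injective.injOn]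
  simp only [card_embedGraph]

end EmbeddedFamilies

section EmbeddedKernels

open Finset

variable {P Q α : Type*} [Fintype P] [DecidableEq P] [Fintype Q] [DecidableEq Q] [DecidableEq α]
  {q s b h g r : ℕ} {L : Finset (Finset P)} {D : Finset (Finset Q)}

/-- The subsets of the ground set corresponding under `ι` to the composition of `𝒰` and `𝒟`. -/
def embeddedComposition (ι : P × Q ↪ α) (𝒰 : Finset (Finset P)) (𝒟 : Finset (Finset Q)) :
    Finset (Finset α) :=
  (composition 𝒰 𝒟).image (embedGraph ι)

variable {ι : P × Q ↪ α} {E : Finset α}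

theorem card_embeddedComposition (𝒰 : Finset (Finset P)) (𝒟 : Finset (Finset Q)) :
    #(embeddedComposition ι 𝒰 𝒟) = #(composition 𝒰 𝒟) :=
  card_image_of_injective _ embedGraph_injective

theorem properTransversals_embeddedComposition_subset (hL : BlockingBound L b)
    (hD : BlockingBound D h) (hplane : IsPlane s D) :
    properTransversals E r (embeddedComposition ι L D) ⊆
      generatedFamily E r (L.biUnion fun l =>
        (sections l (D ∪ powersetCard h univ) \ sections l D).image (embedGraph ι)) ∪
      generatedFamily E r
        (embeddedComposition ι (powersetCard b univ) (powersetCard (s + 1) univ)) := by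
  intro A hA
  obtain ⟨hA, hmeet, hno⟩ := mem_filter.1 hA
  simp only [embeddedComposition, forall_mem_image, embedGraph_inter_nonempty,
    embedGraph_subset_iff_le] at hmeet hno
  obtain ⟨l, hl, ψ, hψ, hψA⟩ | ⟨ψ, hψ, hψA⟩ := exists_le_of_forall_inter_nonempty hL hD hplane
    (fun φ hφ => hmeet hφ) fun φ hφ => hno hφ
  · exact mem_union_left _ (mem_filter.2 ⟨hA, _, mem_biUnion.2 ⟨l, hl, mem_image_of_mem _ hψ⟩,
      embedGraph_subset_iff_le.2 hψA⟩)
  · exact mem_union_right _ (mem_filter.2 ⟨hA, _, mem_image_of_mem _ hψ,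
      embedGraph_subset_iff_le.2 hψA⟩)

theorem card_properTransversals_le (hL : BlockingBound L b) (hD : BlockingBound D h)
    (hplane : IsPlane s D) (hι : ∀ z, ι z ∈ E) (hr : r ≤ #E) :
    #(properTransversals E r (embeddedComposition ι L D)) ≤
      ∑ l ∈ L, ∑ ψ ∈ sections l (D ∪ powersetCard h univ) \ sections l D,
        supersetCount #E r (∑ x, #(ψ x)) +
      ∑ ψ ∈ composition (powersetCard b (univ : Finset P)) (powersetCard (s + 1) (univ : Finset Q)),
        supersetCount #E r (∑ x, #(ψ x)) := by
  refine (card_le_card (properTransversals_embeddedComposition_subset hL hD hplane)).trans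
    ((card_union_le _ _).trans (Nat.add_le_add ?_ ?_))
  · exact (card_generatedFamily_biUnion_le _ _).trans
      (sum_le_sum fun l _ => card_generatedFamily_image_embedGraph_le hι hr _)
  · exact card_generatedFamily_image_embedGraph_le hι hr _

theorem card_properTransversals_mul_pow_le (hL : IsPlane q L) (hD : IsPlane s D)
    (hLb : BlockingBound L b) (hDh : BlockingBound D h) (hι : ∀ z, ι z ∈ E) (hn : r ^ 2 ≤ #E)
    (hP : Fintype.card P ≤ r ^ 2) (hQ : 2 ^ Fintype.card Q ≤ r) (hq : q + 1 ≤ r)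
    (hh : s + 1 + (g + 2) ≤ h) (hb : (q + 1) * (s + 1) + (3 * b + g) ≤ b * (s + 1)) :
    #(properTransversals E r (embeddedComposition ι L D)) * r ^ g ≤
      3 * #(embeddedComposition ι L D) * supersetCount #E r ((q + 1) * (s + 1)) := by
  have hDne : D.Nonempty := card_pos.1 (hD.card_lines ▸ Nat.succ_pos _)
  have hN : #(embeddedComposition ι L D) = #L * #D ^ (q + 1) := by
    rw [card_embeddedComposition, card_composition hL.card_line hD.empty_notMem]
  have hNpos : 0 < #L * #D ^ (q + 1) :=
    Nat.mul_pos (hL.card_lines ▸ Nat.succ_pos _) (Nat.pow_pos hDne.card_pos)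
  have hlines : (∑ l ∈ L, ∑ ψ ∈ sections l (D ∪ powersetCard h univ) \ sections l D,
      supersetCount #E r (∑ x, #(ψ x))) * r ^ g ≤
        #L * (2 * #D ^ (q + 1) * supersetCount #E r ((q + 1) * (s + 1))) := by
    rw [sum_mul]
    refine sum_le_card_nsmul _ _ _ fun l hl => ?_
    rw [← hL.card_line l hl] at hq ⊢
    exact sum_supersetCount_sections_sdiff_mul_le hn hD.card_line hDne hQ hh hq
  have hwide := (sum_supersetCount_composition_mul_le hn hP hQ hb).trans
    (Nat.le_mul_of_pos_left _ hNpos)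
  have hrE : r ≤ #E := (Nat.le_self_pow two_ne_zero r).trans hn
  refine (Nat.mul_le_mul_right _ (card_properTransversals_le hLb hDh hD hι hrE)).trans ?_
  rw [add_mul, hN]
  refine (Nat.add_le_add hlines hwide).trans_eq ?_
  ring

theorem card_filter_mem_embeddedComposition_mul_le (hL : IsPlane q L) (hD : IsPlane s D) (i : α) :
    #{K ∈ embeddedComposition ι L D | i ∈ K} * (Fintype.card P * Fintype.card Q) ≤
      #(embeddedComposition ι L D) * ((q + 1) * (s + 1)) := by
  rw [card_embeddedComposition, embeddedComposition, filter_image]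
  by_cases hi : ∃ z, ι z = i
  · obtain ⟨⟨x, y⟩, rfl⟩ := hi
    simp only [apply_mem_embedGraph]
    exact (Nat.mul_le_mul_right _ card_image_le).trans
      (hL.card_filter_mem_composition_mul_le hD x y)
  · have hempty : {φ ∈ composition L D | i ∈ embedGraph ι φ} = ∅ :=
      filter_eq_empty_iff.2 fun φ _ hφ => by
        obtain ⟨x, y, -, hxy⟩ := mem_embedGraph.1 hφ
        exact hi ⟨_, hxy⟩
    simp [hempty]

theorem inter_nonempty_of_mem_embeddedComposition (hL : IsPlane q L) (hD : IsPlane s D)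
    {K K' : Finset α} (hK : K ∈ embeddedComposition ι L D) (hK' : K' ∈ embeddedComposition ι L D) :
    (K ∩ K').Nonempty := by
  obtain ⟨φ, hφ, rfl⟩ := mem_image.1 hK
  obtain ⟨ψ, hψ, rfl⟩ := mem_image.1 hK'
  obtain ⟨x, y, hy⟩ := hL.exists_inter_nonempty hD hφ hψ
  rw [mem_inter] at hy
  exact ⟨ι (x, y), mem_inter.2 ⟨apply_mem_embedGraph.2 hy.1, apply_mem_embedGraph.2 hy.2⟩⟩

theorem exists_mem_embeddedFibers (hL : IsPlane q L) (hD : IsPlane s D) {K K' : Finset α}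
    (hK : K ∈ embeddedComposition ι L D) (hK' : K' ∈ embeddedComposition ι L D) (hne : K' ≠ K) :
    ∃ Z ∈ embeddedFibers ι D, Z ⊆ K' ∧ s ≤ #(Z \ K) := by
  obtain ⟨φ, hφ, rfl⟩ := mem_image.1 hK
  obtain ⟨ψ, hψ, rfl⟩ := mem_image.1 hK'
  obtain ⟨x, hx, hs⟩ := hL.exists_le_card_sdiff hD hφ hψ (ne_of_apply_ne _ hne)
  refine ⟨_, mem_image_of_mem _ (mk_mem_product (mem_univ x) hx), ?_, ?_⟩
  · exact map_subset_iff_subset_preimage.2 fun y hy => mem_preimage.2 (apply_mem_embedGraph.2 hy)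
  · rw [← card_map ((Function.Embedding.sectR x Q).trans ι)] at hs
    refine hs.trans (card_le_card fun i hi => ?_)
    obtain ⟨y, hy, rfl⟩ := mem_map.1 hi
    rw [mem_sdiff] at hy
    exact mem_sdiff.2 ⟨mem_map_of_mem _ hy.1, fun hmem => hy.2 (apply_mem_embedGraph.1 hmem)⟩

end EmbeddedKernels

section KernelSystems

open Finset

/-- A family `𝒦` of kernels, together with a family `𝒵` of sets separating them, in which every
maximal intersecting extension of the `r`-subsets of `[n]` generated by `𝒦` is almost regular:
the kernels are `k`-sets evenly distributed over `[n]`, and there are few other `r`-sets that meet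
them all. -/
structure IsKernelSystem (n r k : ℕ) (𝒦 𝒵 : Finset (Finset ℕ)) : Prop where
  subset_Icc : ∀ K ∈ 𝒦, K ⊆ Icc 1 n
  card_eq : ∀ K ∈ 𝒦, #K = k
  nonempty : 𝒦.Nonempty
  isIntersecting : IsIntersecting 𝒦
  mul_degree_le : ∀ i, 10 * k * degree 𝒦 i ≤ 11 * #𝒦
  card_properTransversals_mul_le :
    #(properTransversals (Icc 1 n) r 𝒦) * r ^ 2 ≤ 3 * #𝒦 * supersetCount n r k
  separator_subset_Icc : ∀ Z ∈ 𝒵, Z ⊆ Icc 1 n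
  exists_separator : ∀ K ∈ 𝒦, ∀ K' ∈ 𝒦, K' ≠ K → ∃ Z ∈ 𝒵, Z ⊆ K' ∧ 5 ≤ #(Z \ K)
  card_separators_le : #𝒵 ≤ r ^ 3

namespace IsKernelSystem

variable {n r k i : ℕ} {𝒦 𝒵 F : Finset (Finset ℕ)}

theorem inter_nonempty (h : IsKernelSystem n r k 𝒦 𝒵) (hn : 2 * r ≤ n) (hk : k ≤ r)
    (hF : IsFamily n r F) (hFi : IsIntersecting F) (hG : generatedFamily (Icc 1 n) r 𝒦 ⊆ F)
    {A K : Finset ℕ} (hA : A ∈ F) (hK : K ∈ 𝒦) : (K ∩ A).Nonempty :=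
  inter_nonempty_of_generatedFamily_subset (by simpa using hn) hK (h.subset_Icc K hK)
    (h.card_eq K hK ▸ hk) (hF A hA).2 fun B hB => hFi B (hG hB) A hA

theorem degree_le (h : IsKernelSystem n r k 𝒦 𝒵) (hn : 2 * r ≤ n) (hk : k ≤ r)
    (hF : IsFamily n r F) (hFi : IsIntersecting F) (hG : generatedFamily (Icc 1 n) r 𝒦 ⊆ F)
    (hi : i ∈ Icc 1 n) :
    degree F i ≤ degree 𝒦 i * supersetCount n r k + #𝒦 * supersetCount n r (k + 1) +
      #(properTransversals (Icc 1 n) r 𝒦) := by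
  have hle := card_filter_mem_le (E := Icc 1 n) (r := r) (by rw [Nat.card_Icc]; omega) h.subset_Icc
    h.card_eq (fun A hA => mem_powersetCard.2 (hF A hA))
    (fun A hA K hK => h.inter_nonempty hn hk hF hFi hG hA hK) hi
  rwa [Nat.card_Icc, add_tsub_cancel_right] at hle

theorem mul_le_degree (h : IsKernelSystem n r k 𝒦 𝒵) (hr : 100 ≤ r) (hn : r ^ 2 ≤ n)
    (hG : generatedFamily (Icc 1 n) r 𝒦 ⊆ F) (hi : i ∈ Icc 1 n) :
    99 * (#𝒦 * supersetCount n r (k + 1)) ≤ 100 * degree F i := by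
  have hle := card_mul_supersetCount_succ_le (E := Icc 1 n) (r := r)
    (by rw [Nat.card_Icc, add_tsub_cancel_right]; nlinarith) h.subset_Icc h.card_eq
    h.separator_subset_Icc h.exists_separator hG hi
  rw [Nat.card_Icc, add_tsub_cancel_right] at hle
  have hcollisions : 100 * (#𝒵 * supersetCount n r (k + 5)) ≤ supersetCount n r (k + 1) := by
    calc 100 * (#𝒵 * supersetCount n r (k + 5)) ≤ r * (r ^ 3 * supersetCount n r (k + 5)) := by
          gcongr
          exact h.card_separators_le
      _ = supersetCount n r (k + 5) * r ^ 4 := by ring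
      _ ≤ supersetCount n r (k + 1) := supersetCount_mul_pow_le hn (by omega)
  have hmul := Nat.mul_le_mul_left #𝒦 hcollisions
  change _ ≤ degree F i + _ at hle
  linarith

theorem mul_degree_kernel_le {p : ℕ} (h : IsKernelSystem n r k 𝒦 𝒵) (hk : k ≤ 2 * p)
    (hp : p ≤ 2 * k) (i : ℕ) : 80 * (k + p) ^ 2 * degree 𝒦 i ≤ 396 * p * #𝒦 := by
  have hsq : 2 * (k + p) ^ 2 ≤ 9 * (k * p) := by
    zify at hk hp ⊢
    nlinarith
  calc 80 * (k + p) ^ 2 * degree 𝒦 i = 2 * (k + p) ^ 2 * (40 * degree 𝒦 i) := by ring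
    _ ≤ 9 * (k * p) * (40 * degree 𝒦 i) := Nat.mul_le_mul_right _ hsq
    _ = 36 * p * (10 * k * degree 𝒦 i) := by ring
    _ ≤ 36 * p * (11 * #𝒦) := Nat.mul_le_mul_left _ (h.mul_degree_le i)
    _ = 396 * p * #𝒦 := by ring

theorem mul_degree_le_mul (h : IsKernelSystem n r k 𝒦 𝒵) (hr : 100 ≤ r) (hn : r ^ 2 ≤ n)
    (hrk : r ≤ 3 * k) (hkr : 3 * k ≤ 2 * r) (hF : IsFamily n r F) (hFi : IsIntersecting F)
    (hG : generatedFamily (Icc 1 n) r 𝒦 ⊆ F) (hi : i ∈ Icc 1 n) :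
    16 * r ^ 2 * degree F i ≤ 99 * n * (#𝒦 * supersetCount n r (k + 1)) := by
  obtain ⟨p, rfl⟩ : ∃ p, r = k + p := Nat.exists_eq_add_of_le (by omega)
  set c := supersetCount n (k + p) k
  set M := #𝒦 * supersetCount n (k + p) (k + 1)
  have hdeg := h.degree_le (by nlinarith) (by omega) hF hFi hG hi
  have hratio : p * (#𝒦 * c) ≤ n * M := by
    have hle := sub_mul_supersetCount_le (n := n) (r := k + p) (j := k) (by nlinarith)
    rw [Nat.add_sub_cancel_left] at hle
    exact (Nat.mul_left_comm _ _ _).trans_le ((Nat.mul_le_mul_left #𝒦 hle).trans_eq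
      (Nat.mul_left_comm _ _ _))
  have hkernels := h.mul_degree_kernel_le (p := p) (by omega) (by omega) i
  have htransversals : 80 * (#(properTransversals (Icc 1 n) (k + p) 𝒦) * (k + p) ^ 2) ≤
      19 * p * (#𝒦 * c) := by
    calc _ ≤ 80 * (3 * #𝒦 * c) := Nat.mul_le_mul_left _ h.card_properTransversals_mul_le
      _ = 240 * (#𝒦 * c) := by ring
      _ ≤ 19 * p * (#𝒦 * c) := Nat.mul_le_mul_right _ (by omega)
  refine Nat.le_of_mul_le_mul_left ?_ (Nat.succ_pos 4)
  calc (5 : ℕ) * (16 * (k + p) ^ 2 * degree F i) = 80 * (k + p) ^ 2 * degree F i := by ring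
    _ ≤ 80 * (k + p) ^ 2 * (degree 𝒦 i * c + M + #(properTransversals (Icc 1 n) (k + p) 𝒦)) := by
      gcongr
    _ = 80 * (k + p) ^ 2 * degree 𝒦 i * c + 80 * (k + p) ^ 2 * M +
        80 * (#(properTransversals (Icc 1 n) (k + p) 𝒦) * (k + p) ^ 2) := by ring
    _ ≤ 396 * p * #𝒦 * c + 80 * n * M + 19 * p * (#𝒦 * c) := by gcongr
    _ = 415 * (p * (#𝒦 * c)) + 80 * (n * M) := by ring
    _ ≤ 415 * (n * M) + 80 * (n * M) := by gcongr
    _ = 5 * (99 * n * M) := by ring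

theorem exists_balanced_isMaxIntersecting (h : IsKernelSystem n r k 𝒦 𝒵) (hr : 100 ≤ r)
    (hn : r ^ 2 ≤ n) (hrk : r ≤ 3 * k) (hkr : 3 * k ≤ 2 * r) :
    ∃ F, IsFamily n r F ∧ IsMaxIntersecting n r F ∧ Covers n F ∧
      4 * r ^ 2 * maxDeg n F ≤ 25 * n * minDeg n F := by
  obtain ⟨F, hG, hF, hFmax⟩ := exists_isMaxIntersecting (n := n) (r := r) (by omega)
    (fun A hA => mem_powersetCard.1 (mem_filter.1 hA).1)
    (isIntersecting_generatedFamily (E := Icc 1 n) (r := r) h.isIntersecting)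
  refine ⟨F, hF, hFmax, covers_of_degree_pos fun i hi => ?_,
    mul_maxDeg_le_mul_minDeg (by nlinarith) fun i hi j hj => ?_⟩
  · have hpos : 0 < #𝒦 * supersetCount n r (k + 1) :=
      Nat.mul_pos h.nonempty.card_pos (supersetCount_pos (by omega))
    have hle := h.mul_le_degree hr hn hG hi
    omega
  · have hupper := h.mul_degree_le_mul hr hn hrk hkr hF hFmax.1 hG hi
    have hlower := Nat.mul_le_mul_left n (h.mul_le_degree hr hn hG hj)
    linarith

end IsKernelSystem

end KernelSystems

section PlaneCompositions

open Finset

variable {P Q : Type*} [Fintype P] [DecidableEq P] [Fintype Q] [DecidableEq Q]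
  {q s b h n r : ℕ} {L : Finset (Finset P)} {D : Finset (Finset Q)} {ι : P × Q ↪ ℕ}

theorem isKernelSystem_embeddedComposition (hL : IsPlane q L) (hD : IsPlane s D)
    (hLb : BlockingBound L b) (hDh : BlockingBound D h) (hι : ∀ z, ι z ∈ Icc 1 n)
    (hn : r ^ 2 ≤ n) (hP : Fintype.card P ≤ r ^ 2) (hQ : 2 ^ Fintype.card Q ≤ r) (hq : q + 1 ≤ r)
    (hs : 5 ≤ s) (hh : s + 5 ≤ h) (hb : (q + 1) * (s + 1) + (3 * b + 2) ≤ b * (s + 1))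
    (hk : 10 * ((q + 1) * (s + 1)) ^ 2 ≤ 11 * (Fintype.card P * Fintype.card Q)) :
    IsKernelSystem n r ((q + 1) * (s + 1)) (embeddedComposition ι L D) (embeddedFibers ι D) where
  subset_Icc := forall_mem_image.2 fun _ _ => embedGraph_subset hι
  card_eq := forall_mem_image.2 fun φ hφ => by
    rw [card_embedGraph, sum_card_of_mem_composition hL.card_line hD.card_line hφ]
  nonempty := by
    rw [← card_pos, card_embeddedComposition, hL.card_composition_eq hD, hL.card_points,
      hD.card_points]
    positivity
  isIntersecting _ hK _ hK' := inter_nonempty_of_mem_embeddedComposition hL hD hK hK'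
  mul_degree_le i := by
    have hpos : 0 < Fintype.card P * Fintype.card Q :=
      Nat.mul_pos (hL.card_points ▸ Nat.succ_pos _) (hD.card_points ▸ Nat.succ_pos _)
    have hle := card_filter_mem_embeddedComposition_mul_le (ι := ι) hL hD i
    set k := (q + 1) * (s + 1)
    refine Nat.le_of_mul_le_mul_right ?_ hpos
    calc 10 * k * degree (embeddedComposition ι L D) i * (Fintype.card P * Fintype.card Q)
        ≤ 10 * k * (#(embeddedComposition ι L D) * k) :=
          (mul_assoc _ _ _).trans_le (Nat.mul_le_mul_left _ hle)
      _ = #(embeddedComposition ι L D) * (10 * k ^ 2) := by ring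
      _ ≤ #(embeddedComposition ι L D) * (11 * (Fintype.card P * Fintype.card Q)) :=
          Nat.mul_le_mul_left _ hk
      _ = 11 * #(embeddedComposition ι L D) * (Fintype.card P * Fintype.card Q) := by ring
  card_properTransversals_mul_le := by
    have hle := card_properTransversals_mul_pow_le (E := Icc 1 n) (g := 2) hL hD hLb hDh hι
      (by simpa using hn) hP hQ hq (by omega) hb
    rwa [Nat.card_Icc, add_tsub_cancel_right] at hle
  separator_subset_Icc := forall_mem_image.2 fun _ _ =>
    map_subset_iff_subset_preimage.2 fun _ _ => mem_preimage.2 (hι _)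
  exists_separator K hK K' hK' hne := by
    obtain ⟨Z, hZ, hZK', hcard⟩ := exists_mem_embeddedFibers hL hD hK hK' hne
    exact ⟨Z, hZ, hZK', hs.trans hcard⟩
  card_separators_le := by
    calc #(embeddedFibers ι D) ≤ Fintype.card P * #D := card_embeddedFibers_le ι D
      _ ≤ r ^ 2 * r := by
        refine Nat.mul_le_mul hP ?_
        rw [hD.card_lines, ← hD.card_points]
        exact Nat.lt_two_pow_self.le.trans hQ
      _ = r ^ 3 := by ring

end PlaneCompositions

section Parameters

open Finset

theorem exists_embedding_Icc {α : Type*} [Fintype α] {n : ℕ} (h : Fintype.card α ≤ n) :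
    ∃ ι : α ↪ ℕ, ∀ z, ι z ∈ Icc 1 n := by
  refine ⟨((Fintype.equivFin α).toEmbedding.trans Fin.valEmbedding).trans
    (addRightEmbedding 1), fun z => mem_Icc.2 ⟨Nat.succ_pos _, ?_⟩⟩
  exact (Fintype.equivFin α z).isLt.trans_le h

theorem exists_isKernelSystem : ∃ r₀, ∀ n r, r₀ ≤ r → r ^ 2 ≤ n →
    ∃ k 𝒦 𝒵, IsKernelSystem n r k 𝒦 𝒵 ∧ r ≤ 3 * k ∧ 3 * k ≤ 2 * r := by
  obtain ⟨Q, _, _, D, hD, hDh⟩ := exists_isPlane_blockingBound (p := 17) (by norm_num) (by decide)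
  refine ⟨max (2 ^ Fintype.card Q) 10000, fun n r hr hn => ?_⟩
  obtain ⟨hQ, hr⟩ := max_le_iff.1 hr
  obtain ⟨q, hq, hlt, hle⟩ := Nat.exists_prime_lt_and_le_two_mul (r / 54 - 1) (by omega)
  have hrq : r ≤ 54 * (q + 1) := by omega
  have hqr : 54 * (q + 1) ≤ 2 * r := by omega
  have hodd : Odd q := hq.odd_of_ne_two (by omega)
  obtain ⟨P, _, _, L, hL, hLb⟩ := exists_isPlane_blockingBound hq hodd
  have hPQ : Fintype.card (P × Q) ≤ r ^ 2 := by
    rw [Fintype.card_prod, hL.card_points, hD.card_points]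
    nlinarith
  have hP : Fintype.card P ≤ r ^ 2 := by
    rw [hL.card_points]
    nlinarith
  obtain ⟨ι, hι⟩ := exists_embedding_Icc (hPQ.trans hn)
  obtain ⟨m, rfl⟩ := hodd
  refine ⟨_, _, _, isKernelSystem_embeddedComposition hL hD hLb hDh hι hn hP hQ (by omega)
    (by norm_num) (by norm_num) (by omega) ?_, by omega, by omega⟩
  rw [hL.card_points, hD.card_points]
  nlinarith

end Parameters

/-- There is `r₀ > 0` such that for all `r ≥ r₀` and `n ≥ r²` there exists a
maximal intersecting family `F` of `r`-subsets of `[n]` covering `[n]` with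
`4·r²·Δ(F) ≤ 25·n·δ(F)`, i.e. `Δ(F)/δ(F) ≤ (25/4)·n/r²`. -/
theorem exists_balanced_family : ∃ r₀ : ℕ, 0 < r₀ ∧ ∀ n r : ℕ, r₀ ≤ r → r ^ 2 ≤ n →
    ∃ F : Finset (Finset ℕ), IsFamily n r F ∧ IsMaxIntersecting n r F ∧ Covers n F ∧
      4 * r ^ 2 * maxDeg n F ≤ 25 * n * minDeg n F := by
  obtain ⟨r₀, hr₀⟩ := exists_isKernelSystem
  refine ⟨max r₀ 100, lt_max_of_lt_right (by norm_num), fun n r hr hn => ?_⟩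
  obtain ⟨hr, hr'⟩ := max_le_iff.1 hr
  obtain ⟨k, 𝒦, 𝒵, h, hrk, hkr⟩ := hr₀ n r hr hn
  exact h.exists_balanced_isMaxIntersecting hr' hn hrk hkr
end
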